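/- Let Δ be a Cohen-Macaulay simplicial forest on vertex set V(Δ), let R = K[x_v : v ∈ V(Δ)] be a polynomial ring over a field K, and let F be a special leaf of Δ. Then for each 1 ≤ k ≤ ν(Δ), depth(R/(I(Δ)^{[k]} + ⟨x_F⟩)) = |V(Δ)| − ν(Δ) + k − 1. -/

import Mathlib

open MvPolynomial

/-- A simplicial complex on the vertex set `V`, presented by its set of facets
(the maximal faces).  Every facet is nonempty and no facet contains another. -/
structure SimplicialComplexOn (V : Type) [Fintype V] [DecidableEq V] : Type where
  facets : Finset (Finset V)
  nonempty_facet : ∀ F ∈ facets, F.Nonempty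
  antichain : ∀ F ∈ facets, ∀ G ∈ facets, F ⊆ G → F = G

variable {V : Type} [Fintype V] [DecidableEq V]

/-- `F` is a leaf of the collection of facets `S`: either `F` is the only facet, or
there is a facet `G ≠ F` (a joint) with `F ∩ H ⊆ F ∩ G` for every facet `H ≠ F`. -/
def IsLeafOf (S : Finset (Finset V)) (F : Finset V) : Prop :=
  F ∈ S ∧ ((∀ H ∈ S, H = F) ∨
    ∃ G ∈ S, G ≠ F ∧ ∀ H ∈ S, H ≠ F → F ∩ H ⊆ F ∩ G)

/-- The forest property for a facet collection: every nonempty subcollection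
(i.e. every nonempty subcomplex) has a leaf. -/
def HasLeafProp (S : Finset (Finset V)) : Prop :=
  ∀ T ⊆ S, T.Nonempty → ∃ F, IsLeafOf T F

/-- A good leaf: a facet which is a leaf of every subcomplex containing it. -/
def IsGoodLeafOf (S : Finset (Finset V)) (F : Finset V) : Prop :=
  F ∈ S ∧ ∀ T ⊆ S, F ∈ T → IsLeafOf T F

/-- A special leaf: a leaf `F` such that for all facets `H, H' ≠ F`,
`H ∩ H' ≠ ∅` iff `(H ∩ H') \ F ≠ ∅`. -/
def IsSpecialLeafOf (S : Finset (Finset V)) (F : Finset V) : Prop :=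
  IsLeafOf S F ∧ ∀ H ∈ S, ∀ H' ∈ S, H ≠ F → H' ≠ F →
    ((H ∩ H').Nonempty ↔ ((H ∩ H') \ F).Nonempty)

/-- A matching: a subcollection of the facets that is pairwise disjoint. -/
def IsMatchingOf (S : Finset (Finset V)) (M : Finset (Finset V)) : Prop :=
  M ⊆ S ∧ ∀ F ∈ M, ∀ G ∈ M, F ≠ G → F ∩ G = ∅

/-- The matching number: maximum size of a matching. -/
noncomputable def matchingNumberOf (S : Finset (Finset V)) : ℕ :=
  sSup {n | ∃ M : Finset (Finset V), IsMatchingOf S M ∧ M.card = n}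

/-- The facet collection `S` is grafted: it decomposes as `Fs ∪ Gs` where
(1) every vertex of a `G ∈ Gs` lies in some `F ∈ Fs`, (2) `Fs` is exactly the set
of leaves of `S`, (3) `Fs` and `Gs` are disjoint, (4) the members of `Fs` are
pairwise disjoint, and (5) for each `G ∈ Gs`, deleting the facet `G` leaves a
grafted collection. -/
inductive IsGrafted : Finset (Finset V) → Prop where
  | intro (S Fs Gs : Finset (Finset V))
      (hunion : S = Fs ∪ Gs)
      (hdisj : Disjoint Fs Gs)
      (hcover : ∀ G ∈ Gs, ∀ v ∈ G, ∃ F ∈ Fs, v ∈ F)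
      (hleaves : ∀ F, IsLeafOf S F ↔ F ∈ Fs)
      (hFdisj : ∀ F ∈ Fs, ∀ F' ∈ Fs, F ≠ F' → F ∩ F' = ∅)
      (hrec : ∀ G ∈ Gs, IsGrafted (S.erase G)) :
      IsGrafted S

/-- `S` is the (minimal presentation of the) grafting of the collection `Gs`
with the simplices `Fs`. -/
def IsGraftingDecomp (S Fs Gs : Finset (Finset V)) : Prop :=
  S = Fs ∪ Gs ∧ Disjoint Fs Gs ∧
  (∀ G ∈ Gs, ∀ v ∈ G, ∃ F ∈ Fs, v ∈ F) ∧
  (∀ F, IsLeafOf S F ↔ F ∈ Fs) ∧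
  (∀ F ∈ Fs, ∀ F' ∈ Fs, F ≠ F' → F ∩ F' = ∅) ∧
  (∀ G ∈ Gs, IsGrafted (S.erase G))

/-- A Cohen-Macaulay simplicial forest, combinatorially: a grafted simplicial forest. -/
def IsCMForestFacets (S : Finset (Finset V)) : Prop :=
  HasLeafProp S ∧ IsGrafted S

/-- The closed neighborhood `N[F] = {F} ∪ {G ∈ S : G ≠ F, G ∩ F ≠ ∅}`. -/
def closedNbhd (S : Finset (Finset V)) (F : Finset V) : Finset (Finset V) :=
  insert F (S.filter fun G => G ≠ F ∧ (G ∩ F).Nonempty)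

/-- The contraction of the facet collection `S` on `A`: the minimal members of
`{F \ A : F ∈ S}`. -/
def contraction (S : Finset (Finset V)) (A : Finset V) : Finset (Finset V) :=
  (S.image fun F => F \ A).filter fun F' => ∀ G ∈ S, G \ A ⊆ F' → G \ A = F'

variable (K : Type) [Field K]

/-- The square-free monomial `x_S = ∏_{v ∈ S} x_v`. -/
noncomputable def xMon (S : Finset V) : MvPolynomial V K := ∏ v ∈ S, X v

/-- The facet ideal `I(Δ) = ⟨x_F : F a facet⟩`. -/
noncomputable def facetIdealOf (S : Finset (Finset V)) : Ideal (MvPolynomial V K) :=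
  Ideal.span { p | ∃ F ∈ S, p = xMon K F }

/-- The `k`-th square-free power of an ideal: the ideal generated by all
square-free monomials lying in `I ^ k`. -/
noncomputable def sqfreePow (I : Ideal (MvPolynomial V K)) (k : ℕ) :
    Ideal (MvPolynomial V K) :=
  Ideal.span { p | (∃ S : Finset V, p = xMon K S) ∧ p ∈ I ^ k }

/-- The depth of `R/I` with respect to the homogeneous maximal ideal
`m = ⟨x_v : v ∈ V⟩`: the largest length of an `R/I`-regular sequence of
elements of `m`. -/
noncomputable def gradedDepth (I : Ideal (MvPolynomial V K)) : ℕ :=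
  sSup {n | ∃ rs : List (MvPolynomial V K), rs.length = n ∧
    (∀ r ∈ rs, r ∈ Ideal.span (Set.range (X : V → MvPolynomial V K))) ∧
    RingTheory.Sequence.IsRegular (MvPolynomial V K ⧸ I) rs}

/-- `R/I` is Cohen-Macaulay: its depth equals its Krull dimension. -/
def IsCMQuot (I : Ideal (MvPolynomial V K)) : Prop :=
  ((gradedDepth K I : ℕ∞) : WithBot ℕ∞) = ringKrullDim (MvPolynomial V K ⧸ I)

/-!
The sequence `e_d, …, e_1` of elementary symmetric polynomials is weakly regular modulo a
square-free monomial ideal `I` as soon as it is so modulo `I : x_X` and `I + (x_X)`. Modulo the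
variables of a set `A` with `|V ∖ A| = d`, it is regular because `e_d` is there the product of the
remaining variables. In the other direction, the depth is at most the dimension, which is bounded
through the vertex covers of the generators.

The leaves of a grafted forest are blocks: they partition the vertices, and the traces of the facets
on a block form a chain, so that at most one facet of a matching meets a given block. If `I` is
generated by the variables of `A` and the matchings of size `k`, the depth of `R/I` in the presence
of `r` blocks is `|V| - |A| - r + k - 1`. To see this, take the least facet `X` inside a special
block `B`.
* The ideal `I : x_X` is the one of the facets disjoint from `B`, with `k - 1` in place of `k`.
* Colons of `I + (x_X)` by the proper subsets `C` of `X`, followed by the addition of a variable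
  `x_v` with `v ∈ X ∖ C` common to all facets that meet `X ∖ C`, give the ideal of `A ∪ {v}` and of
  the facets avoiding `v` with the vertices of `B` removed; as `B` is special, this removal
  preserves disjointness, hence matchings and `k`.

Both ideals have one block less and the same expected depth; for `A = ∅` and `X = B` a special leaf,
the second bullet gives the depth modulo `I + (x_B)`. The induction ends at `k = 0` (the unit
ideal) or at `k = r + 1` (an ideal of variables). A special block exists at every stage: in a
forest, every nonempty vertex set `W` has a vertex `v` such that the traces on `W` of the facets
containing `v` form a chain, and for `W` one takes a common vertex of each block.
-/

section SquareFreeMonomialIdeals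

variable {σ : Type}

/-- The exponent vector of the square-free monomial `xMon K S`, relating it to `monomial`. -/
noncomputable def sqfreeExponent (S : Finset σ) : σ →₀ ℕ :=
  ∑ v ∈ S, Finsupp.single v 1

/-- The square-free monomial ideal generated by the monomials of a family of vertex sets. -/
noncomputable def sqfreeIdeal (𝒢 : Set (Finset σ)) : Ideal (MvPolynomial σ K) :=
  Ideal.span (xMon K '' 𝒢)

theorem sqfreeExponent_apply [DecidableEq σ] (S : Finset σ) (v : σ) :
    sqfreeExponent S v = if v ∈ S then 1 else 0 := by
  simp [sqfreeExponent, Finsupp.finsetSum_apply, Finsupp.single_apply]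

theorem support_sqfreeExponent (S : Finset σ) : (sqfreeExponent S).support = S := by
  classical
  ext v
  simp [sqfreeExponent_apply]

theorem sqfreeExponent_le_iff {S : Finset σ} {m : σ →₀ ℕ} :
    sqfreeExponent S ≤ m ↔ S ⊆ m.support := by
  refine ⟨fun h ↦ support_sqfreeExponent S ▸ Finsupp.support_mono h, fun h v ↦ ?_⟩
  classical
  rw [sqfreeExponent_apply]
  split_ifs with hv
  · exact Nat.one_le_iff_ne_zero.2 (Finsupp.mem_support_iff.1 (h hv))
  · exact Nat.zero_le _

theorem support_add_sqfreeExponent [DecidableEq σ] (m : σ →₀ ℕ) (S : Finset σ) :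
    (m + sqfreeExponent S).support = m.support ∪ S := by
  ext v
  by_cases hv : v ∈ S <;> simp [sqfreeExponent_apply, hv]

theorem xMon_eq_monomial (S : Finset σ) : xMon K S = monomial (sqfreeExponent S) 1 :=
  (monomial_sum_one S _).symm

variable {K}

theorem mem_sqfreeIdeal {𝒢 : Set (Finset σ)} {f : MvPolynomial σ K} :
    f ∈ sqfreeIdeal K 𝒢 ↔ ∀ m ∈ f.support, ∃ G ∈ 𝒢, G ⊆ m.support := by
  have h : xMon K '' 𝒢 = (fun s ↦ monomial s (1 : K)) '' (sqfreeExponent '' 𝒢) := by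
    rw [Set.image_image]
    exact Set.image_congr fun S _ ↦ xMon_eq_monomial K S
  simp [sqfreeIdeal, h, mem_ideal_span_monomial_image, sqfreeExponent_le_iff]

theorem xMon_mem_sqfreeIdeal {𝒢 : Set (Finset σ)} {S : Finset σ} :
    xMon K S ∈ sqfreeIdeal K 𝒢 ↔ ∃ G ∈ 𝒢, G ⊆ S := by
  classical
  simp [mem_sqfreeIdeal, xMon_eq_monomial, support_sqfreeExponent]

theorem sqfreeIdeal_le_iff {𝒢 : Set (Finset σ)} {I : Ideal (MvPolynomial σ K)} :
    sqfreeIdeal K 𝒢 ≤ I ↔ ∀ G ∈ 𝒢, xMon K G ∈ I := by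
  simp [sqfreeIdeal, Ideal.span_le, Set.subset_def]

theorem sqfreeIdeal_mono {𝒢 𝒢' : Set (Finset σ)} (h : IsCoinitialFor 𝒢 𝒢') :
    sqfreeIdeal K 𝒢 ≤ sqfreeIdeal K 𝒢' :=
  sqfreeIdeal_le_iff.2 fun _ hG ↦ xMon_mem_sqfreeIdeal.2 (h hG)

theorem sqfreeIdeal_insert (X : Finset σ) (𝒢 : Set (Finset σ)) :
    sqfreeIdeal K (insert X 𝒢) = sqfreeIdeal K 𝒢 ⊔ Ideal.span {xMon K X} := by
  rw [sqfreeIdeal, Set.image_insert_eq, Ideal.span_insert, sup_comm, sqfreeIdeal]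

theorem sqfreeIdeal_eq_top {𝒢 : Set (Finset σ)} (h : ∅ ∈ 𝒢) : sqfreeIdeal K 𝒢 = ⊤ := by
  have h1 : xMon K ∅ ∈ sqfreeIdeal K 𝒢 := xMon_mem_sqfreeIdeal.2 ⟨∅, h, subset_rfl⟩
  exact (Ideal.eq_top_iff_one _).2 (by simpa only [xMon, Finset.prod_empty] using h1)

theorem colon_sqfreeIdeal [DecidableEq σ] (𝒢 : Set (Finset σ)) (X : Finset σ) :
    (sqfreeIdeal K 𝒢).colon {xMon K X} = sqfreeIdeal K ((· \ X) '' 𝒢) := by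
  ext f
  rw [Submodule.mem_colon_singleton, smul_eq_mul, mem_sqfreeIdeal, mem_sqfreeIdeal,
    xMon_eq_monomial]
  constructor
  · intro h m hm
    obtain ⟨G, hG, hGm⟩ := h (m + sqfreeExponent X) (by simpa [mem_support_iff] using hm)
    refine ⟨G \ X, ⟨G, hG, rfl⟩, ?_⟩
    rw [support_add_sqfreeExponent, Finset.union_comm] at hGm
    exact sdiff_le_iff.2 hGm
  · intro h m hm
    rw [mem_support_iff, coeff_mul_monomial', mul_one, ite_ne_right_iff] at hm
    obtain ⟨hXm, hm⟩ := hm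
    obtain ⟨_, ⟨G, hG, rfl⟩, hGm⟩ := h _ (mem_support_iff.2 hm)
    refine ⟨G, hG, ?_⟩
    rw [← tsub_add_cancel_of_le hXm, support_add_sqfreeExponent, Finset.union_comm]
    exact sdiff_le_iff.1 hGm

end SquareFreeMonomialIdeals

section WeaklyRegularSequences

open RingTheory.Sequence Function
open scoped Pointwise

universe u

variable {R : Type u} [CommRing R]

theorem sup_span_singleton_eq_of_sub_mem {I : Ideal R} {x y : R} (h : x - y ∈ I) :
    I ⊔ Ideal.span {x} = I ⊔ Ideal.span {y} := by
  refine le_antisymm (sup_le le_sup_left ?_) (sup_le le_sup_left ?_) <;>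
    rw [Ideal.span_singleton_le_iff_mem]
  · exact sub_add_cancel x y ▸ Submodule.add_mem_sup h (Ideal.mem_span_singleton_self y)
  · exact sub_add_cancel y x ▸
      Submodule.add_mem_sup (neg_sub x y ▸ neg_mem h) (Ideal.mem_span_singleton_self x)

theorem isWeaklyRegular_of_subsingleton (M : Type*) [AddCommGroup M] [Module R M] [Subsingleton M]
    (rs : List R) : IsWeaklyRegular M rs :=
  ⟨fun _ _ _ _ _ ↦ Subsingleton.elim _ _⟩

theorem isWeaklyRegular_of_exact (rs : List R) {M₁ M₂ M₃ : Type*} [AddCommGroup M₁]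
    [AddCommGroup M₂] [AddCommGroup M₃] [Module R M₁] [Module R M₂] [Module R M₃]
    {f : M₁ →ₗ[R] M₂} {g : M₂ →ₗ[R] M₃} (hf : Injective f) (hfg : Exact f g) (hg : Surjective g)
    (h₁ : IsWeaklyRegular M₁ rs) (h₃ : IsWeaklyRegular M₃ rs) : IsWeaklyRegular M₂ rs := by
  induction rs generalizing M₁ M₂ M₃ with
  | nil => exact .nil R _
  | cons r rs ih =>
    rw [isWeaklyRegular_cons_iff] at h₁ h₃ ⊢
    have hf' : Injective (QuotSMulTop.map r f) := by
      have h₀ : Exact (0 : M₁ →ₗ[R] M₁) f := (LinearMap.exact_zero_iff_injective _ f).2 hf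
      have h := QuotSMulTop.map_first_exact_on_four_term_exact_of_isSMulRegular_last h₀ hfg h₃.1
      rwa [map_zero, LinearMap.exact_zero_iff_injective] at h
    exact ⟨isSMulRegular_of_range_eq_ker hf hfg.linearMap_ker_eq.symm h₁.1 h₃.1,
      ih hf' (QuotSMulTop.map_exact r hfg hg) (QuotSMulTop.map_surjective r hg) h₁.2 h₃.2⟩

theorem isWeaklyRegular_quotient_of_colon_of_sup {rs : List R} (I : Ideal R) (x : R)
    (hcolon : IsWeaklyRegular (R ⧸ I.colon {x}) rs)
    (hsup : IsWeaklyRegular (R ⧸ (I ⊔ Ideal.span {x})) rs) : IsWeaklyRegular (R ⧸ I) rs := by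
  let mulX : (R ⧸ I.colon {x}) →ₗ[R] R ⧸ I :=
    Submodule.mapQ _ I (LinearMap.mulRight R x) fun y hy ↦ Submodule.mem_colon_singleton.1 hy
  let proj : (R ⧸ I) →ₗ[R] R ⧸ (I ⊔ Ideal.span {x}) := Submodule.factor le_sup_left
  have mulX_mk (a : R) : mulX (Submodule.Quotient.mk a) = Submodule.Quotient.mk (a * x) := rfl
  have proj_mk (a : R) : proj (Submodule.Quotient.mk a) = Submodule.Quotient.mk a := rfl
  have mulX_injective : Injective mulX := by
    refine (injective_iff_map_eq_zero mulX).2 fun a ha ↦ ?_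
    obtain ⟨a, rfl⟩ := Submodule.Quotient.mk_surjective _ a
    rw [mulX_mk, Submodule.Quotient.mk_eq_zero] at ha
    exact (Submodule.Quotient.mk_eq_zero _).2 (Submodule.mem_colon_singleton.2 ha)
  have exact : Exact mulX proj := by
    intro b
    obtain ⟨b, rfl⟩ := Submodule.Quotient.mk_surjective _ b
    rw [proj_mk, Submodule.Quotient.mk_eq_zero, Submodule.mem_sup]
    constructor
    · rintro ⟨i, hi, _, hx, rfl⟩
      obtain ⟨a, rfl⟩ := Ideal.mem_span_singleton'.1 hx
      refine ⟨Submodule.Quotient.mk a, ?_⟩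
      rw [mulX_mk, eq_comm, Submodule.Quotient.eq, add_sub_cancel_right]
      exact hi
    · rintro ⟨a, ha⟩
      obtain ⟨a, rfl⟩ := Submodule.Quotient.mk_surjective _ a
      rw [mulX_mk, eq_comm, Submodule.Quotient.eq] at ha
      exact ⟨_, ha, a * x, Ideal.mem_span_singleton'.2 ⟨a, rfl⟩, sub_add_cancel _ _⟩
  exact isWeaklyRegular_of_exact rs mulX_injective exact (Submodule.factor_surjective _) hcolon hsup

theorem isWeaklyRegular_quotient_cons {r : R} {rs : List R} (I : Ideal R)
    (hr : I.colon {r} ≤ I) (h : IsWeaklyRegular (R ⧸ (I ⊔ Ideal.span {r})) rs) :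
    IsWeaklyRegular (R ⧸ I) (r :: rs) := by
  refine .cons ((isSMulRegular_quotient_iff_mem_of_smul_mem I r).2 fun x hx ↦
    hr (Submodule.mem_colon_singleton.2 (by rwa [smul_eq_mul, mul_comm]))) ?_
  have hmap : Submodule.map I.mkQ (Ideal.span {r}) = r • (⊤ : Submodule R (R ⧸ I)) := by
    have hspan : Ideal.span {r} = r • (⊤ : Submodule R R) := by
      rw [← Submodule.ideal_span_singleton_smul, smul_eq_mul, Ideal.mul_top]
    rw [hspan, Submodule.map_pointwise_smul, Submodule.map_top, Submodule.range_mkQ]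
  exact (((Submodule.quotientQuotientEquivQuotientSup I (Ideal.span {r})).symm.trans
    (Submodule.quotEquivOfEq _ _ hmap)).isWeaklyRegular_congr rs).1 h

theorem length_le_supportDim [IsNoetherianRing R] {M : Type*} [AddCommGroup M] [Module R M]
    [Module.Finite R M] {rs : List R} (h : IsRegular M rs) :
    (rs.length : WithBot ℕ∞) ≤ Module.supportDim R M := by
  induction rs generalizing M with
  | nil =>
    have := h.nontrivial
    have : Nonempty (Module.support R M) := Module.nonempty_support_of_nontrivial.to_subtype
    simpa [Module.supportDim] using Order.krullDim_nonneg
  | cons r rs ih =>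
    rw [isRegular_cons_iff] at h
    calc ((r :: rs).length : WithBot ℕ∞) = rs.length + 1 := by push_cast [List.length_cons]; rfl
      _ ≤ Module.supportDim R (QuotSMulTop r M) + 1 := by gcongr; exact ih h.2
      _ ≤ Module.supportDim R M :=
        Module.supportDim_quotSMulTop_succ_le_of_notMem_minimalPrimes
          fun _ ↦ h.1.notMem_of_mem_minimalPrimes

end WeaklyRegularSequences

/-- The one-element vertex sets of `A`, generating the ideal of the variables of `A`. -/
def singletons {σ : Type} (A : Finset σ) : Set (Finset σ) :=
  (fun v ↦ {v}) '' (A : Set σ)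

theorem mem_singletons {σ : Type} {A G : Finset σ} : G ∈ singletons A ↔ ∃ v ∈ A, {v} = G :=
  Iff.rfl

section ElementarySymmetricSequence

open RingTheory.Sequence

variable {σ : Type} [Fintype σ] {K}

/-- The sequence `e_d, …, e_1` of elementary symmetric polynomials, the regular sequence that
bounds the depth from below. The highest degree comes first, as `e_d` becomes a monomial modulo
`|V| - d` variables. -/
noncomputable def esymmSeq (σ K : Type) [Fintype σ] [Field K] : ℕ → List (MvPolynomial σ K)
  | 0 => []
  | d + 1 => esymm σ K (d + 1) :: esymmSeq σ K d

variable (K) in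
/-- The sequence `e_d, …, e_1` is weakly regular modulo the square-free monomial ideal of `𝒢`. Weak
regularity admits the unit ideal, at which colon ideals may end. -/
def EsymmRegular (d : ℕ) (𝒢 : Set (Finset σ)) : Prop :=
  IsWeaklyRegular (MvPolynomial σ K ⧸ sqfreeIdeal K 𝒢) (esymmSeq σ K d)

theorem length_esymmSeq (d : ℕ) : (esymmSeq σ K d).length = d := by
  induction d with
  | zero => rfl
  | succ d ih => rw [esymmSeq, List.length_cons, ih]

theorem EsymmRegular.congr {d : ℕ} {𝒢 𝒢' : Set (Finset σ)} (h : EsymmRegular K d 𝒢)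
    (hle : IsCoinitialFor 𝒢 𝒢') (hge : IsCoinitialFor 𝒢' 𝒢) : EsymmRegular K d 𝒢' := by
  have heq : sqfreeIdeal K 𝒢 = sqfreeIdeal K 𝒢' :=
    le_antisymm (sqfreeIdeal_mono hle) (sqfreeIdeal_mono hge)
  rwa [EsymmRegular, ← heq]

theorem EsymmRegular.of_empty_mem {d : ℕ} {𝒢 : Set (Finset σ)} (h : ∅ ∈ 𝒢) :
    EsymmRegular K d 𝒢 := by
  have : Subsingleton (MvPolynomial σ K ⧸ sqfreeIdeal K 𝒢) :=
    Ideal.Quotient.subsingleton_iff.2 (sqfreeIdeal_eq_top h)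
  exact isWeaklyRegular_of_subsingleton _ _

theorem EsymmRegular.of_sdiff_of_insert [DecidableEq σ] {d : ℕ} {𝒢 : Set (Finset σ)} (X : Finset σ)
    (hsdiff : EsymmRegular K d ((· \ X) '' 𝒢)) (hinsert : EsymmRegular K d (insert X 𝒢)) :
    EsymmRegular K d 𝒢 := by
  rw [EsymmRegular, ← colon_sqfreeIdeal] at hsdiff
  rw [EsymmRegular, sqfreeIdeal_insert] at hinsert
  exact isWeaklyRegular_quotient_of_colon_of_sup _ _ hsdiff hinsert

/-- Colon by the vertices of `X` one at a time: once all of `X` has been removed, the ideal is the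
unit ideal, so that only the sums with a single variable of `X` matter. -/
theorem EsymmRegular.of_forall_ssubset [DecidableEq σ] {d : ℕ} {𝒢 : Set (Finset σ)} {X : Finset σ}
    (hX : X ∈ 𝒢)
    (h : ∀ C ⊂ X, ∃ v ∈ X \ C, EsymmRegular K d (insert {v} ((· \ C) '' 𝒢))) :
    EsymmRegular K d 𝒢 := by
  induction X using Finset.strongInduction generalizing 𝒢 with
  | H X ih =>
    obtain rfl | hne := X.eq_empty_or_nonempty
    · exact .of_empty_mem hX
    obtain ⟨v, hv, hreg⟩ := h ∅ (Finset.empty_ssubset.2 hne)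
    simp only [Finset.sdiff_empty, Set.image_id'] at hv hreg
    refine .of_sdiff_of_insert {v} (ih (X \ {v}) ?_ ⟨X, hX, rfl⟩ fun C hC ↦ ?_) hreg
    · exact Finset.sdiff_ssubset (Finset.singleton_subset_iff.2 hv) (Finset.singleton_nonempty v)
    · obtain ⟨w, hw, hreg⟩ := h ({v} ∪ C) (by grind)
      refine ⟨w, by rwa [sdiff_sdiff], ?_⟩
      simpa only [Set.image_image, sdiff_sdiff] using! hreg

theorem esymm_sub_xMon_compl_mem [DecidableEq σ] (A : Finset σ) :
    esymm σ K Aᶜ.card - xMon K Aᶜ ∈ sqfreeIdeal K (singletons A) := by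
  have hmem : Aᶜ ∈ Finset.powersetCard Aᶜ.card (Finset.univ : Finset σ) := by
    simp [Finset.mem_powersetCard]
  rw [esymm, ← Finset.sum_erase_add _ _ hmem, xMon, add_sub_cancel_right]
  refine Ideal.sum_mem _ fun S hS ↦ xMon_mem_sqfreeIdeal.2 ?_
  rw [Finset.mem_erase, Finset.mem_powersetCard] at hS
  have hSA : ¬ S ⊆ Aᶜ := fun h ↦ hS.1 (Finset.eq_of_subset_of_card_le h hS.2.2.ge)
  obtain ⟨v, hvS, hvA⟩ := Finset.not_subset.1 hSA
  exact ⟨{v}, mem_singletons.2 ⟨v, by simpa using hvA, rfl⟩, by simpa using hvS⟩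

theorem esymmRegular_insert_compl_singletons [DecidableEq σ] {d : ℕ} {A : Finset σ}
    (h : ∀ v ∉ A, EsymmRegular K d (singletons (insert v A))) :
    EsymmRegular K d (insert Aᶜ (singletons A)) := by
  refine .of_forall_ssubset (Set.mem_insert _ _) fun C hC ↦ ?_
  obtain ⟨v, hv⟩ := Finset.sdiff_nonempty.2 hC.2
  have hvA : v ∉ A := Finset.mem_compl.1 (Finset.mem_sdiff.1 hv).1
  refine ⟨v, hv, (h v hvA).congr ?_ ?_⟩
  · rintro _ ⟨a, ha, rfl⟩
    obtain rfl | ha := Finset.mem_insert.1 ha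
    · exact ⟨{a}, Set.mem_insert _ _, le_rfl⟩
    · exact ⟨{a} \ C, .inr ⟨{a}, .inr ⟨a, ha, rfl⟩, rfl⟩, Finset.sdiff_subset⟩
  · rintro _ (rfl | ⟨_, rfl | ⟨a, ha, rfl⟩, rfl⟩)
    · exact ⟨{v}, ⟨v, Finset.mem_insert_self _ _, rfl⟩, le_rfl⟩
    · exact ⟨{v}, ⟨v, Finset.mem_insert_self _ _, rfl⟩, Finset.singleton_subset_iff.2 hv⟩
    · exact ⟨{a}, ⟨a, Finset.mem_insert_of_mem ha, rfl⟩,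
        by simpa using fun h ↦ Finset.mem_compl.1 (hC.1 h) ha⟩

/-- Modulo the variables of `A`, the elementary symmetric polynomial of degree `|V \ A|` is the
product of the remaining variables, hence a nonzerodivisor. -/
theorem esymmRegular_singletons {d : ℕ} {A : Finset σ} (hA : d + A.card = Fintype.card σ) :
    EsymmRegular K d (singletons A) := by
  classical
  induction d generalizing A with
  | zero => exact IsWeaklyRegular.nil _ _
  | succ d ih =>
    have hcard : Aᶜ.card = d + 1 := by rw [Finset.card_compl]; omega
    have hmem := esymm_sub_xMon_compl_mem (K := K) A
    rw [hcard] at hmem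
    rw [EsymmRegular, esymmSeq]
    refine isWeaklyRegular_quotient_cons _ (fun f hf ↦ ?_) ?_
    · have hf' : f ∈ (sqfreeIdeal K (singletons A)).colon {xMon K Aᶜ} := by
        rw [Submodule.mem_colon_singleton, smul_eq_mul] at hf ⊢
        simpa only [mul_sub, sub_sub_cancel] using sub_mem hf (Ideal.mul_mem_left _ f hmem)
      rw [colon_sqfreeIdeal] at hf'
      refine sqfreeIdeal_mono ?_ hf'
      rintro _ ⟨_, ⟨v, hv, rfl⟩, rfl⟩
      exact ⟨{v}, ⟨v, hv, rfl⟩, by simpa using hv⟩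
    · rw [sup_span_singleton_eq_of_sub_mem hmem, ← sqfreeIdeal_insert]
      exact esymmRegular_insert_compl_singletons fun v hv ↦
        ih (by rw [Finset.card_insert_of_notMem hv]; omega)

end ElementarySymmetricSequence

section Depth

open RingTheory.Sequence

theorem isRegular_quotient_of_le {R : Type*} [CommRing R] {I m : Ideal R} {rs : List R}
    (hm : m ≠ ⊤) (hI : I ≤ m) (hrs : ∀ r ∈ rs, r ∈ m) (h : IsWeaklyRegular (R ⧸ I) rs) :
    IsRegular (R ⧸ I) rs := by
  refine ⟨h, fun htop ↦ hm ?_⟩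
  have hle : Ideal.ofList rs • (⊤ : Submodule R (R ⧸ I)) ≤ Submodule.map I.mkQ m := by
    rw [← Submodule.range_mkQ I, ← Submodule.map_top, ← Submodule.map_smul'', smul_eq_mul]
    exact Submodule.map_mono (Ideal.mul_le_left.trans (Ideal.span_le.2 hrs))
  have hmap : Submodule.map I.mkQ m = ⊤ := top_unique (htop.le.trans hle)
  rw [← sup_eq_right.2 hI, ← Submodule.comap_map_mkQ, hmap, Submodule.comap_top]

variable {σ : Type} {K}

theorem xMon_mem_idealOfVars {S : Finset σ} (hS : S.Nonempty) : xMon K S ∈ idealOfVars σ K := by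
  obtain ⟨v, hv⟩ := hS
  exact Ideal.mem_of_dvd _ (Finset.dvd_prod_of_mem _ hv) (Ideal.subset_span ⟨v, rfl⟩)

theorem idealOfVars_ne_top : idealOfVars σ K ≠ ⊤ := by
  rw [Ideal.ne_top_iff_one, ← pow_one (idealOfVars σ K), ← C_1, C_mem_pow_idealOfVars_iff]
  simp

theorem mem_idealOfVars_of_mem_esymmSeq [Fintype σ] {d : ℕ} {r : MvPolynomial σ K}
    (hr : r ∈ esymmSeq σ K d) : r ∈ idealOfVars σ K := by
  induction d with
  | zero => simp [esymmSeq] at hr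
  | succ d ih =>
    obtain rfl | hr := List.mem_cons.1 hr
    · refine Ideal.sum_mem _ fun S hS ↦ xMon_mem_idealOfVars (Finset.card_pos.1 ?_)
      exact (Finset.mem_powersetCard.1 hS).2 ▸ d.succ_pos
    · exact ih hr

theorem ringKrullDim_quotient_singletons_le [Fintype σ] (A : Finset σ) :
    ringKrullDim (MvPolynomial σ K ⧸ sqfreeIdeal K (singletons A)) ≤
      (Fintype.card σ - A.card : ℕ) := by
  classical
  let mk := Ideal.Quotient.mkₐ K (sqfreeIdeal K (singletons A))
  let incl : MvPolynomial {v // v ∉ A} K →ₐ[K] MvPolynomial σ K ⧸ sqfreeIdeal K (singletons A) :=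
    mk.comp (rename Subtype.val)
  let proj : MvPolynomial σ K →ₐ[K] MvPolynomial {v // v ∉ A} K :=
    aeval fun v ↦ if h : v ∉ A then X ⟨v, h⟩ else 0
  have incl_comp_proj : incl.comp proj = mk := by
    refine algHom_ext fun v ↦ ?_
    by_cases hv : v ∈ A
    · have hmk : mk (X v) = 0 := by
        refine Ideal.Quotient.eq_zero_iff_mem.2 (Ideal.subset_span ⟨{v}, ⟨v, hv, rfl⟩, ?_⟩)
        exact Finset.prod_singleton _ _
      simp [proj, hv, hmk]
    · simp [proj, incl, hv]
  have incl_surjective : Function.Surjective incl := fun y ↦ by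
    obtain ⟨f, rfl⟩ := Ideal.Quotient.mk_surjective y
    exact ⟨proj f, DFunLike.congr_fun incl_comp_proj f⟩
  refine (ringKrullDim_le_of_surjective incl.toRingHom incl_surjective).trans_eq ?_
  rw [ringKrullDim_of_isNoetherianRing, ringKrullDim_eq_zero_of_field, zero_add,
    Nat.card_eq_fintype_card, Fintype.card_subtype_compl, Fintype.card_coe]

/-- The bound is the dimension of the linear subspaces `x_v = 0`, `v ∈ A`, that make up the zero
locus of the ideal. -/
theorem ringKrullDim_quotient_sqfreeIdeal_le [Fintype σ] [DecidableEq σ] {𝒢 : Set (Finset σ)}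
    {d : ℕ} (h : ∀ A : Finset σ, (∀ G ∈ 𝒢, (G ∩ A).Nonempty) → Fintype.card σ ≤ d + A.card) :
    ringKrullDim (MvPolynomial σ K ⧸ sqfreeIdeal K 𝒢) ≤ d := by
  classical
  rw [ringKrullDim_quotient]
  refine iSup_le fun l ↦ ?_
  let P : Ideal (MvPolynomial σ K) := l.head.1.asIdeal
  let A : Finset σ := {v | X v ∈ P}
  have hcard : Fintype.card σ ≤ d + A.card := h A fun G hG ↦ by
    have hGP : xMon K G ∈ P := l.head.2 (Ideal.subset_span ⟨G, hG, rfl⟩)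
    obtain ⟨v, hvG, hvP⟩ := (l.head.1.isPrime.prod_mem_iff).1 hGP
    exact ⟨v, Finset.mem_inter.2 ⟨hvG, Finset.mem_filter_univ _ |>.2 hvP⟩⟩
  have hAP : sqfreeIdeal K (singletons A) ≤ P := by
    refine sqfreeIdeal_le_iff.2 ?_
    rintro _ ⟨v, hv, rfl⟩
    simpa [xMon] using (Finset.mem_filter_univ _).1 hv
  let l' : LTSeries (PrimeSpectrum.zeroLocus (sqfreeIdeal K (singletons A) : Set _)) :=
    { length := l.length
      toFun i := ⟨(l i).1, (PrimeSpectrum.mem_zeroLocus _ _).2 (hAP.trans (l.head_le i))⟩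
      step := l.step }
  have hle := ringKrullDim_quotient_singletons_le (K := K) A
  rw [ringKrullDim_quotient] at hle
  refine (Order.LTSeries.length_le_krullDim l').trans (hle.trans ?_)
  exact_mod_cast Nat.sub_le_iff_le_add.2 hcard

theorem gradedDepth_sqfreeIdeal [Fintype σ] [DecidableEq σ] {𝒢 : Set (Finset σ)} {d : ℕ}
    (hne : ∀ G ∈ 𝒢, G.Nonempty) (hreg : EsymmRegular K d 𝒢)
    (hcover : ∀ A : Finset σ, (∀ G ∈ 𝒢, (G ∩ A).Nonempty) → Fintype.card σ ≤ d + A.card) :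
    gradedDepth K (sqfreeIdeal K 𝒢) = d := by
  have hle : sqfreeIdeal K 𝒢 ≤ idealOfVars σ K :=
    sqfreeIdeal_le_iff.2 fun G hG ↦ xMon_mem_idealOfVars (hne G hG)
  refine IsGreatest.csSup_eq ⟨⟨esymmSeq σ K d, length_esymmSeq d,
    fun _ ↦ mem_idealOfVars_of_mem_esymmSeq, isRegular_quotient_of_le idealOfVars_ne_top hle
      (fun _ ↦ mem_idealOfVars_of_mem_esymmSeq) hreg⟩, ?_⟩
  rintro _ ⟨rs, rfl, _, hrs⟩
  have hlen := length_le_supportDim hrs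
  rw [Module.supportDim_quotient_eq_ringKrullDim] at hlen
  exact_mod_cast hlen.trans (ringKrullDim_quotient_sqfreeIdeal_le hcover)

end Depth

section Matchings

variable {σ : Type} [DecidableEq σ]

/-- The vertex sets of the matchings of size `k`. Their monomials generate the `k`-th square-free
power of the facet ideal. -/
def matchingUnions (T : Finset (Finset σ)) (k : ℕ) : Set (Finset σ) :=
  {U | ∃ M, IsMatchingOf T M ∧ M.card = k ∧ M.biUnion id = U}

theorem IsMatchingOf.mono {T T' M M' : Finset (Finset σ)} (hM : IsMatchingOf T M) (hM' : M' ⊆ M)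
    (hT : M' ⊆ T') : IsMatchingOf T' M' :=
  ⟨hT, fun F hF G hG ↦ hM.2 F (hM' hF) G (hM' hG)⟩

theorem IsMatchingOf.pairwiseDisjoint {T M : Finset (Finset σ)} (hM : IsMatchingOf T M) :
    (M : Set (Finset σ)).PairwiseDisjoint id :=
  fun F hF G hG h ↦ Finset.disjoint_iff_inter_eq_empty.2 (hM.2 F hF G hG h)

theorem IsMatchingOf.insert {T M : Finset (Finset σ)} {G : Finset σ} (hM : IsMatchingOf T M)
    (hG : G ∈ T) (h : Disjoint G (M.biUnion id)) : IsMatchingOf T (insert G M) := by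
  rw [Finset.disjoint_biUnion_right] at h
  refine ⟨Finset.insert_subset hG hM.1, ?_⟩
  simp only [Finset.mem_insert, ← Finset.disjoint_iff_inter_eq_empty]
  rintro F (rfl | hF) F' (rfl | hF') hne
  · exact absurd rfl hne
  · exact h F' hF'
  · exact (h F hF).symm
  · exact hM.pairwiseDisjoint hF hF' hne

theorem insert_union_mem_matchingUnions {T : Finset (Finset σ)} {k : ℕ} {G U : Finset σ}
    (hU : U ∈ matchingUnions T k) (hG : G ∈ T) (hne : G.Nonempty) (h : Disjoint G U) :
    G ∪ U ∈ matchingUnions T (k + 1) := by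
  obtain ⟨M, hM, rfl, rfl⟩ := hU
  refine ⟨insert G M, hM.insert hG h, Finset.card_insert_of_notMem fun hGM ↦ ?_,
    Finset.biUnion_insert⟩
  exact hne.ne_empty (Finset.disjoint_self_iff_empty _ |>.1
    (h.mono_right (Finset.subset_biUnion_of_mem id hGM)))

theorem nonempty_of_mem_matchingUnions {T : Finset (Finset σ)} {k : ℕ} (hk : 1 ≤ k)
    (hne : ∀ F ∈ T, F.Nonempty) {U : Finset σ} (hU : U ∈ matchingUnions T k) : U.Nonempty := by
  obtain ⟨M, hM, rfl, rfl⟩ := hU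
  obtain ⟨F, hF⟩ := Finset.card_pos.1 hk
  exact (hne F (hM.1 hF)).mono (Finset.subset_biUnion_of_mem id hF)

theorem empty_mem_matchingUnions_zero (T : Finset (Finset σ)) : ∅ ∈ matchingUnions T 0 :=
  ⟨∅, ⟨Finset.empty_subset T, by simp⟩, rfl, rfl⟩

theorem matchingUnions_mono {T T' : Finset (Finset σ)} (h : T ⊆ T') (k : ℕ) :
    matchingUnions T k ⊆ matchingUnions T' k := by
  rintro _ ⟨M, hM, hcard, rfl⟩
  exact ⟨M, hM.mono subset_rfl (hM.1.trans h), hcard, rfl⟩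

theorem exists_subset_mem_matchingUnions {T M : Finset (Finset σ)} {k : ℕ} (hM : IsMatchingOf T M)
    (hk : k ≤ M.card) : ∃ U ∈ matchingUnions T k, U ⊆ M.biUnion id := by
  obtain ⟨M', hM', hcard⟩ := Finset.exists_subset_card_eq hk
  exact ⟨_, ⟨M', hM.mono hM' (hM'.trans hM.1), hcard, rfl⟩,
    Finset.biUnion_subset_biUnion_of_subset_left id hM'⟩

theorem mem_matchingUnions_filter_notMem {T : Finset (Finset σ)} {k : ℕ} {v : σ} {U : Finset σ} :
    U ∈ matchingUnions {H ∈ T | v ∉ H} k ↔ U ∈ matchingUnions T k ∧ v ∉ U := by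
  constructor
  · refine fun hU ↦ ⟨matchingUnions_mono (Finset.filter_subset _ _) k hU, ?_⟩
    obtain ⟨M, hM, -, rfl⟩ := hU
    simpa using fun H hH ↦ (Finset.mem_filter.1 (hM.1 hH)).2
  · rintro ⟨⟨M, hM, hcard, rfl⟩, hv⟩
    refine ⟨M, hM.mono subset_rfl fun H hH ↦ Finset.mem_filter.2 ⟨hM.1 hH, fun hvH ↦ ?_⟩,
      hcard, rfl⟩
    exact hv (Finset.mem_biUnion.2 ⟨H, hH, hvH⟩)

theorem biUnion_image_sdiff (M : Finset (Finset σ)) (B : Finset σ) :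
    (M.image (· \ B)).biUnion id = M.biUnion id \ B := by
  ext v
  simp only [Finset.image_biUnion, Finset.mem_biUnion, Finset.mem_sdiff, id]
  grind

theorem isMatchingOf_image_sdiff_iff {T M : Finset (Finset σ)} {B : Finset σ} (hM : M ⊆ T)
    (hinj : Set.InjOn (· \ B) (M : Set (Finset σ)))
    (hT : ∀ H ∈ T, ∀ H' ∈ T, (H ∩ H').Nonempty → ((H ∩ H') \ B).Nonempty) :
    IsMatchingOf (T.image (· \ B)) (M.image (· \ B)) ↔ IsMatchingOf T M := by
  have hdisj (H H' : Finset σ) (hH : H ∈ M) (hH' : H' ∈ M) :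
      (H \ B) ∩ (H' \ B) = ∅ ↔ H ∩ H' = ∅ := by
    have hinter : (H \ B) ∩ (H' \ B) = (H ∩ H') \ B := inf_sdiff.symm
    rw [hinter, ← Finset.not_nonempty_iff_eq_empty, ← Finset.not_nonempty_iff_eq_empty, not_iff_not]
    exact ⟨fun h ↦ h.mono Finset.sdiff_subset, hT H (hM hH) H' (hM hH')⟩
  simp only [IsMatchingOf, hM, Finset.image_subset_image hM, true_and, Finset.forall_mem_image]
  refine forall₄_congr fun H hH H' hH' ↦ ?_
  rw [hdisj H H' hH hH', ne_eq, ne_eq, hinj.eq_iff hH hH']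

theorem IsMatchingOf.injOn_sdiff {T M : Finset (Finset σ)} {B : Finset σ} (hM : IsMatchingOf T M)
    (hne : ∀ H ∈ T, ¬ H ⊆ B) : Set.InjOn (· \ B) (M : Set (Finset σ)) := by
  intro H hH H' hH' (heq : H \ B = H' \ B)
  obtain ⟨v, hv⟩ := Finset.sdiff_nonempty.2 (hne H (hM.1 hH))
  refine hM.pairwiseDisjoint.elim_finset hH hH' v (Finset.mem_sdiff.1 hv).1 ?_
  exact (Finset.mem_sdiff.1 (heq ▸ hv)).1

theorem matchingUnions_image_sdiff {T : Finset (Finset σ)} {B : Finset σ}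
    (hne : ∀ H ∈ T, ¬ H ⊆ B)
    (hT : ∀ H ∈ T, ∀ H' ∈ T, (H ∩ H').Nonempty → ((H ∩ H') \ B).Nonempty) (k : ℕ) :
    matchingUnions (T.image (· \ B)) k = (· \ B) '' matchingUnions T k := by
  ext U
  constructor
  · rintro ⟨M', hM', hcard, rfl⟩
    obtain ⟨M, hMT, hinj, rfl⟩ := Finset.exists_subset_injOn_image_eq_of_surjOn
      (T : Set (Finset σ)) M' fun _ h ↦ Finset.mem_image.1 (hM'.1 h)
    refine ⟨_, ⟨M, (isMatchingOf_image_sdiff_iff hMT hinj hT).1 hM', ?_, rfl⟩,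
      (biUnion_image_sdiff M B).symm⟩
    rwa [Finset.card_image_of_injOn hinj] at hcard
  · rintro ⟨_, ⟨M, hM, hcard, rfl⟩, rfl⟩
    have hinj := hM.injOn_sdiff hne
    exact ⟨M.image (· \ B), (isMatchingOf_image_sdiff_iff hM.1 hinj hT).2 hM,
      (Finset.card_image_of_injOn hinj).trans hcard, biUnion_image_sdiff M B⟩

end Matchings

section SquareFreePowers

variable {σ : Type} {K}

theorem facetIdealOf_eq_sqfreeIdeal (S : Finset (Finset σ)) :
    facetIdealOf K S = sqfreeIdeal K (S : Set (Finset σ)) := by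
  rw [facetIdealOf, sqfreeIdeal]
  congr 1
  ext p
  simp [eq_comm]

variable [DecidableEq σ]

theorem xMon_mem_facetIdealOf_pow {S : Finset (Finset σ)} {k : ℕ} {U : Finset σ}
    (hU : U ∈ matchingUnions S k) : xMon K U ∈ facetIdealOf K S ^ k := by
  obtain ⟨M, hM, rfl, rfl⟩ := hU
  have hprod : xMon K (M.biUnion id) = ∏ H ∈ M, xMon K H :=
    Finset.prod_biUnion hM.pairwiseDisjoint
  rw [hprod, ← Finset.prod_const]
  exact Ideal.prod_mem_prod fun H hH ↦ Ideal.subset_span ⟨H, hM.1 hH, rfl⟩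

theorem exists_matchingUnions_of_mem_pow {S : Finset (Finset σ)} (hne : ∀ F ∈ S, F.Nonempty)
    {k : ℕ} {f : MvPolynomial σ K} (hf : f ∈ facetIdealOf K S ^ k) :
    ∀ m ∈ f.support, (∀ v, m v ≤ 1) → ∃ U ∈ matchingUnions S k, U ⊆ m.support := by
  induction k generalizing f with
  | zero => exact fun m _ _ ↦ ⟨∅, empty_mem_matchingUnions_zero S, Finset.empty_subset _⟩
  | succ k ih =>
    rw [pow_succ'] at hf
    refine Submodule.mul_induction_on hf (fun a ha b hb m hm hm1 ↦ ?_) fun a b ha hb m hm ↦ ?_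
    · obtain ⟨ma, hma, mb, hmb, rfl⟩ := Finset.mem_add.1 (support_mul a b hm)
      have hle (v : σ) : ma v + mb v ≤ 1 := hm1 v
      obtain ⟨U, hU, hUb⟩ := ih hb mb hmb fun v ↦ (Nat.le_add_left _ _).trans (hle v)
      rw [facetIdealOf_eq_sqfreeIdeal, mem_sqfreeIdeal] at ha
      obtain ⟨G, hG, hGa⟩ := ha ma hma
      have hdisj : Disjoint ma.support mb.support := Finset.disjoint_left.2 fun v hva hvb ↦ by
        have := hle v
        rw [Finsupp.mem_support_iff] at hva hvb
        omega
      refine ⟨G ∪ U, insert_union_mem_matchingUnions hU hG (hne G hG) (hdisj.mono hGa hUb), ?_⟩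
      rw [Finsupp.support_add_eq hdisj]
      exact Finset.union_subset_union hGa hUb
    · exact (Finset.mem_union.1 (support_add hm)).elim (ha m) (hb m)

theorem sqfreePow_facetIdealOf {S : Finset (Finset σ)} (hne : ∀ F ∈ S, F.Nonempty) (k : ℕ) :
    sqfreePow K (facetIdealOf K S) k = sqfreeIdeal K (matchingUnions S k) := by
  refine le_antisymm (Ideal.span_le.2 ?_) (sqfreeIdeal_le_iff.2 fun U hU ↦
    Ideal.subset_span ⟨⟨U, rfl⟩, xMon_mem_facetIdealOf_pow hU⟩)
  rintro _ ⟨⟨T, rfl⟩, hT⟩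
  refine xMon_mem_sqfreeIdeal.2 ?_
  have hmem : sqfreeExponent T ∈ (xMon K T).support := by simp [xMon_eq_monomial]
  have hle (v : σ) : sqfreeExponent T v ≤ 1 := by
    rw [sqfreeExponent_apply]
    exact ite_le_one le_rfl zero_le_one
  simpa only [support_sqfreeExponent] using exists_matchingUnions_of_mem_pow hne hT _ hmem hle

end SquareFreePowers

section Forests

variable {σ : Type} [DecidableEq σ]

theorem IsLeafOf.exists_joint {T : Finset (Finset σ)} {L H : Finset σ} (hL : IsLeafOf T L)
    (hH : H ∈ T) (hne : H ≠ L) : ∃ G ∈ T, G ≠ L ∧ ∀ H ∈ T, H ≠ L → L ∩ H ⊆ L ∩ G :=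
  hL.2.resolve_left fun h ↦ hne (h H hH)

theorem HasLeafProp.mono {T T' : Finset (Finset σ)} (hT : HasLeafProp T) (h : T' ⊆ T) :
    HasLeafProp T' :=
  fun U hU ↦ hT U (hU.trans h)

theorem HasLeafProp.image {T : Finset (Finset σ)} (hT : HasLeafProp T) {f : Finset σ → Finset σ}
    (hf : ∀ s t, f (s ∩ t) = f s ∩ f t) : HasLeafProp (T.image f) := by
  intro T' hT' hne
  obtain ⟨U, hU, hinj, rfl⟩ := Finset.exists_subset_injOn_image_eq_of_surjOn
    (T : Set (Finset σ)) T' fun _ h ↦ Finset.mem_image.1 (hT' h)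
  obtain ⟨L, hL, honly | ⟨G, hG, hGL, hjoint⟩⟩ := hT U hU (Finset.image_nonempty.1 hne)
  · refine ⟨f L, Finset.mem_image_of_mem f hL, .inl ?_⟩
    exact Finset.forall_mem_image.2 fun H hH ↦ congrArg f (honly H hH)
  · refine ⟨f L, Finset.mem_image_of_mem f hL, .inr ⟨f G, Finset.mem_image_of_mem f hG,
      hinj.ne hG hL hGL, Finset.forall_mem_image.2 fun H hH hHL ↦ ?_⟩⟩
    have hsub : (L ∩ H) ∩ (L ∩ G) = L ∩ H :=
      Finset.inter_eq_left.2 (hjoint H hH (ne_of_apply_ne f hHL))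
    rw [← hf, ← hf, ← hsub, hf (L ∩ H)]
    exact Finset.inter_subset_right

theorem HasLeafProp.insert_empty {T : Finset (Finset σ)} (hT : HasLeafProp T) :
    HasLeafProp (insert ∅ T) := by
  intro U hU hne
  by_cases hmem : ∅ ∈ U
  · refine ⟨∅, hmem, or_iff_not_imp_left.2 fun honly ↦ ?_⟩
    push Not at honly
    obtain ⟨G, hG, hGne⟩ := honly
    exact ⟨G, hG, hGne.ne_empty, fun H _ _ ↦ by simp⟩
  · exact hT U ((Finset.subset_insert_iff_of_notMem hmem).1 hU) hne

theorem IsLeafOf.of_erase {T : Finset (Finset σ)} {L E G : Finset σ} (hL : IsLeafOf (T.erase E) L)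
    (hG : G ∈ T.erase E) (hGL : G ≠ L) (hE : ∀ H ∈ T, H ≠ E → E ∩ H ⊆ E ∩ G) : IsLeafOf T L := by
  obtain ⟨hLE, hLT⟩ := Finset.mem_erase.1 hL.1
  obtain ⟨J, hJ, hJL, hjoint⟩ := hL.exists_joint hG hGL
  refine ⟨hLT, .inr ⟨J, Finset.mem_of_mem_erase hJ, hJL, fun H hH hHL ↦ ?_⟩⟩
  obtain rfl | hHE := eq_or_ne H E
  · have hLG : L ∩ H ⊆ L ∩ G := Finset.subset_inter Finset.inter_subset_left <|
      (Finset.inter_comm L H ▸ hE L hLT hLE).trans Finset.inter_subset_right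
    exact hLG.trans (hjoint G hG hGL)
  · exact hjoint H (Finset.mem_erase.2 ⟨hHE, hH⟩) hHL

theorem HasLeafProp.exists_isLeafOf_ne {T : Finset (Finset σ)} (hT : HasLeafProp T) {E H : Finset σ}
    (hE : E ∈ T) (hH : H ∈ T) (hHE : H ≠ E) : ∃ L ≠ E, IsLeafOf T L := by
  induction T using Finset.strongInduction generalizing E H with
  | H T ih =>
    obtain ⟨L, hL⟩ := hT T subset_rfl ⟨E, hE⟩
    obtain hLE | rfl := ne_or_eq L E
    · exact ⟨L, hLE, hL⟩
    obtain ⟨G, hG, hGL, hjoint⟩ := hL.exists_joint hH hHE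
    have hG' : G ∈ T.erase L := Finset.mem_erase.2 ⟨hGL, hG⟩
    by_cases hother : ∃ H' ∈ T.erase L, H' ≠ G
    · obtain ⟨H', hH', hne⟩ := hother
      obtain ⟨L', hL'G, hL'⟩ := ih (T.erase L) (Finset.erase_ssubset hE)
        (hT.mono (Finset.erase_subset _ _)) hG' hH' hne
      exact ⟨L', (Finset.mem_erase.1 hL'.1).1, hL'.of_erase hG' hL'G.symm hjoint⟩
    · push Not at hother
      refine ⟨G, hGL, hG, .inr ⟨L, hE, hGL.symm, fun H' hH' hne ↦ ?_⟩⟩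
      rw [not_imp_comm.1 (fun h ↦ hother H' (Finset.mem_erase.2 ⟨h, hH'⟩)) hne]

theorem isChain_of_isChain_image_inter {T : Finset (Finset σ)} {W L : Finset σ} {v : σ}
    (hTW : ∀ H ∈ T, H ⊆ W) (hTL : ∀ H ∈ T, H ≠ W → v ∈ H → H ⊆ L)
    (hchain : IsChain (· ⊆ ·) {H | H ∈ T.image (· ∩ L) ∧ v ∈ H}) :
    IsChain (· ⊆ ·) {H | H ∈ T ∧ v ∈ H} := by
  rintro H ⟨hH, hvH⟩ H' ⟨hH', hvH'⟩ -
  obtain rfl | hHW := eq_or_ne H W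
  · exact .inr (hTW H' hH')
  obtain rfl | hHW' := eq_or_ne H' W
  · exact .inl (hTW H hH)
  have htrace {J : Finset σ} (hJ : J ∈ T) (hJW : J ≠ W) (hvJ : v ∈ J) :
      J ∈ {J | J ∈ T.image (· ∩ L) ∧ v ∈ J} :=
    ⟨Finset.mem_image.2 ⟨J, hJ, Finset.inter_eq_left.2 (hTL J hJ hJW hvJ)⟩, hvJ⟩
  exact hchain.total (htrace hH hHW hvH) (htrace hH' hHW' hvH')

/-- The induction descends to the traces on a leaf `L` of the maximal members properly contained
in `W`: a vertex of `L` off the joint lies in no maximal member other than `L`. -/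
theorem HasLeafProp.exists_isChain_of_ssubset {W : Finset σ} {T : Finset (Finset σ)}
    (hT : HasLeafProp T) (hTW : ∀ H ∈ T, H ⊆ W) {E : Finset σ} (hE : E ∈ T) (hEW : E ⊂ W) :
    ∃ v ∈ W, v ∉ E ∧ IsChain (· ⊆ ·) {H | H ∈ T ∧ v ∈ H} := by
  classical
  induction W using Finset.strongInduction generalizing T E with
  | H W ih =>
    let N := (T.erase W).filter fun H ↦ Maximal (· ∈ T.erase W) H
    have hNmax {H : Finset σ} (hH : H ∈ N) : Maximal (· ∈ T.erase W) H := (Finset.mem_filter.1 hH).2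
    have hNT : N ⊆ T := (Finset.filter_subset _ _).trans (Finset.erase_subset _ _)
    have hNle {H : Finset σ} (hH : H ∈ T) (hHW : H ≠ W) : ∃ H' ∈ N, H ⊆ H' := by
      obtain ⟨H', hle, hmax⟩ := (T.erase W).exists_le_maximal (Finset.mem_erase.2 ⟨hHW, hH⟩)
      exact ⟨H', Finset.mem_filter.2 ⟨hmax.prop, hmax⟩, hle⟩
    have hNW {H : Finset σ} (hH : H ∈ N) : H ⊂ W :=
      (hTW H (hNT hH)).ssubset_of_ne (Finset.mem_erase.1 (hNmax hH).prop).1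
    obtain ⟨E', hE'N, hEE'⟩ := hNle hE hEW.ne
    by_cases hother : ∃ H ∈ N, H ≠ E'
    · obtain ⟨H, hH, hHE'⟩ := hother
      obtain ⟨L, hLE', hL⟩ := (hT.mono hNT).exists_isLeafOf_ne hE'N hH hHE'
      obtain ⟨G, hG, hGL, hjoint⟩ := hL.exists_joint hE'N hLE'.symm
      have hGL' : G ∩ L ⊂ L := Finset.inter_subset_right.ssubset_of_ne fun h ↦
        hGL ((hNmax hL.1).eq_of_le (hNmax hG).prop (Finset.inter_eq_right.1 h)).symm
      obtain ⟨v, hvL, hvG, hchain⟩ := ih L (hNW hL.1)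
        (hT.image (f := (· ∩ L)) fun s t ↦ Finset.inter_inter_distrib_right s t L)
        (Finset.forall_mem_image.2 fun _ _ ↦ Finset.inter_subset_right)
        (Finset.mem_image_of_mem _ (hNT hG)) hGL'
      have honly {H : Finset σ} (hH : H ∈ N) (hvH : v ∈ H) : H = L := by
        by_contra hne
        have hv := hjoint H hH hne (Finset.mem_inter.2 ⟨hvL, hvH⟩)
        exact hvG (Finset.inter_comm L G ▸ hv)
      refine ⟨v, (hNW hL.1).subset hvL, fun hvE ↦ hLE' (honly hE'N (hEE' hvE)).symm, ?_⟩
      refine isChain_of_isChain_image_inter hTW (fun H hH hHW hvH ↦ ?_) hchain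
      obtain ⟨H', hH', hle⟩ := hNle hH hHW
      exact honly hH' (hle hvH) ▸ hle
    · push Not at hother
      obtain ⟨v, hvW, hvE'⟩ := Finset.exists_of_ssubset (hNW hE'N)
      refine ⟨v, hvW, fun hvE ↦ hvE' (hEE' hvE), Set.Subsingleton.isChain ?_⟩
      have honly {H : Finset σ} (hH : H ∈ T) (hvH : v ∈ H) : H = W := by
        by_contra hne
        obtain ⟨H', hH', hle⟩ := hNle hH hne
        exact hvE' (hother H' hH' ▸ hle hvH)
      exact fun H hH H' hH' ↦ (honly hH.1 hH.2).trans (honly hH'.1 hH'.2).symm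

theorem HasLeafProp.exists_isChain_image_inter {T : Finset (Finset σ)} (hT : HasLeafProp T)
    {W : Finset σ} (hW : W.Nonempty) :
    ∃ v ∈ W, IsChain (· ⊆ ·) ((· ∩ W) '' {H | H ∈ T ∧ v ∈ H}) := by
  obtain ⟨v, hvW, -, hchain⟩ := HasLeafProp.exists_isChain_of_ssubset (W := W)
    (hT.image (f := (· ∩ W)) fun s t ↦ Finset.inter_inter_distrib_right s t W).insert_empty
    (Finset.forall_mem_insert _ _ _ |>.2 ⟨Finset.empty_subset W,
      Finset.forall_mem_image.2 fun _ _ ↦ Finset.inter_subset_right⟩)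
    (Finset.mem_insert_self ∅ _) (Finset.empty_ssubset.2 hW)
  refine ⟨v, hvW, hchain.mono ?_⟩
  rintro _ ⟨H, ⟨hH, hvH⟩, rfl⟩
  exact ⟨Finset.mem_insert_of_mem (Finset.mem_image_of_mem _ hH), Finset.mem_inter.2 ⟨hvH, hvW⟩⟩

end Forests

section Chains

variable {σ : Type} [DecidableEq σ]

theorem isChain_image_inter_mono {T : Set (Finset σ)} {B W : Finset σ} (hW : W ⊆ B)
    (hT : IsChain (· ⊆ ·) ((· ∩ B) '' T)) : IsChain (· ⊆ ·) ((· ∩ W) '' T) := by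
  have himage : (· ∩ W) '' T = (· ∩ W) '' ((· ∩ B) '' T) := by
    simp only [Set.image_image, Finset.inter_assoc, Finset.inter_eq_right.2 hW]
  rw [himage]
  exact hT.image_of_map_rel _ _ _ fun _ _ h ↦ Finset.inter_subset_inter_right h

theorem exists_mem_of_isChain_image_inter {T : Finset (Finset σ)} {W : Finset σ}
    (hW : W.Nonempty) (hT : IsChain (· ⊆ ·) ((· ∩ W) '' (T : Set (Finset σ)))) :
    ∃ v ∈ W, ∀ H ∈ T, (H ∩ W).Nonempty → v ∈ H := by
  obtain hS | hS := (T.filter fun H ↦ (H ∩ W).Nonempty).eq_empty_or_nonempty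
  · obtain ⟨v, hv⟩ := hW
    exact ⟨v, hv, fun H hH hne ↦ absurd hne (Finset.filter_eq_empty_iff.1 hS hH)⟩
  · obtain ⟨G, hG, hmin⟩ := Finset.exists_min_image _ (fun H ↦ (H ∩ W).card) hS
    obtain ⟨hGT, v, hv⟩ := Finset.mem_filter.1 hG
    refine ⟨v, (Finset.mem_inter.1 hv).2, fun H hH hne ↦ ?_⟩
    suffices v ∈ H ∩ W from (Finset.mem_inter.1 this).1
    obtain hle | hle := hT.total (Set.mem_image_of_mem _ hGT) (Set.mem_image_of_mem _ hH)
    · exact hle hv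
    · exact Finset.eq_of_subset_of_card_le hle (hmin H (Finset.mem_filter.2 ⟨hH, hne⟩)) ▸ hv

end Chains

section BlockForests

variable {σ : Type} [DecidableEq σ]

/-- A forest `T` whose vertices are partitioned by some of its members, the blocks `𝔅`, with the
traces of the members on each block forming a chain. The leaves of a grafted forest are such
blocks; the notion is weaker so as to be preserved under deleting the vertices of a block. -/
structure IsBlockForest (𝔅 T : Finset (Finset σ)) : Prop where
  hasLeafProp : HasLeafProp T
  subset : 𝔅 ⊆ T
  nonempty : ∀ H ∈ T, H.Nonempty
  pairwiseDisjoint : (𝔅 : Set (Finset σ)).PairwiseDisjoint id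
  subset_biUnion : ∀ H ∈ T, H ⊆ 𝔅.biUnion id
  isChain : ∀ B ∈ 𝔅, IsChain (· ⊆ ·) ((· ∩ B) '' (T : Set (Finset σ)))

/-- The analogue for blocks of the condition defining special leaves. As members contained in `B`
other than `B` itself may exist, all of them are exempt. -/
def IsSpecialBlock (T : Finset (Finset σ)) (B : Finset σ) : Prop :=
  ∀ H ∈ T, ∀ H' ∈ T, ¬ H ⊆ B → ¬ H' ⊆ B → (H ∩ H').Nonempty → ((H ∩ H') \ B).Nonempty

namespace IsBlockForest

variable {𝔅 T : Finset (Finset σ)}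

theorem exists_block (h : IsBlockForest 𝔅 T) {H : Finset σ} (hH : H ∈ T) {v : σ} (hv : v ∈ H) :
    ∃ B ∈ 𝔅, v ∈ B :=
  Finset.mem_biUnion.1 (h.subset_biUnion H hH hv)

theorem eq_of_mem (h : IsBlockForest 𝔅 T) {B B' : Finset σ} (hB : B ∈ 𝔅) (hB' : B' ∈ 𝔅) {v : σ}
    (hv : v ∈ B) (hv' : v ∈ B') : B = B' :=
  h.pairwiseDisjoint.elim_finset hB hB' v hv hv'

theorem exists_common_vertex (h : IsBlockForest 𝔅 T) {B C : Finset σ} (hB : B ∈ 𝔅) (hCB : C ⊆ B)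
    (hC : C.Nonempty) : ∃ v ∈ C, ∀ H ∈ T, (H ∩ C).Nonempty → v ∈ H :=
  exists_mem_of_isChain_image_inter hC (isChain_image_inter_mono hCB (h.isChain B hB))

theorem isMatchingOf (h : IsBlockForest 𝔅 T) : IsMatchingOf T 𝔅 :=
  ⟨h.subset, fun _ hB _ hB' hne ↦
    Finset.disjoint_iff_inter_eq_empty.1 (h.pairwiseDisjoint hB hB' hne)⟩

theorem eq_of_isMatchingOf (h : IsBlockForest 𝔅 T) {M : Finset (Finset σ)} (hM : IsMatchingOf T M)
    {B H H' : Finset σ} (hB : B ∈ 𝔅) (hH : H ∈ M) (hH' : H' ∈ M) (hHB : (H ∩ B).Nonempty)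
    (hHB' : (H' ∩ B).Nonempty) : H = H' := by
  obtain ⟨v, -, hv⟩ := h.exists_common_vertex hB subset_rfl (h.nonempty B (h.subset hB))
  exact hM.pairwiseDisjoint.elim_finset hH hH' v (hv H (hM.1 hH) hHB) (hv H' (hM.1 hH') hHB')

theorem card_le_of_isMatchingOf (h : IsBlockForest 𝔅 T) {M : Finset (Finset σ)}
    (hM : IsMatchingOf T M) : M.card ≤ 𝔅.card := by
  refine Finset.card_le_card_of_forall_subsingleton (fun H B ↦ (H ∩ B).Nonempty)
    (fun H hH ↦ ?_) fun B hB H hH H' hH' ↦ h.eq_of_isMatchingOf hM hB hH.1 hH'.1 hH.2 hH'.2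
  obtain ⟨v, hv⟩ := h.nonempty H (hM.1 hH)
  obtain ⟨B, hB, hvB⟩ := h.exists_block (hM.1 hH) hv
  exact ⟨B, hB, v, Finset.mem_inter.2 ⟨hv, hvB⟩⟩

theorem matchingNumberOf_eq_card (h : IsBlockForest 𝔅 T) : matchingNumberOf T = 𝔅.card :=
  IsGreatest.csSup_eq ⟨⟨𝔅, h.isMatchingOf, rfl⟩, by
    rintro _ ⟨M, hM, rfl⟩
    exact h.card_le_of_isMatchingOf hM⟩

theorem matchingUnions_eq_empty (h : IsBlockForest 𝔅 T) {k : ℕ} (hk : 𝔅.card < k) :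
    matchingUnions T k = ∅ := by
  rw [Set.eq_empty_iff_forall_notMem]
  rintro _ ⟨M, hM, rfl, rfl⟩
  exact hk.not_ge (h.card_le_of_isMatchingOf hM)

theorem card_lt_card_add (h : IsBlockForest 𝔅 T) {A : Finset σ} {k : ℕ}
    (hcover : ∀ U ∈ matchingUnions T k, (U ∩ A).Nonempty) : 𝔅.card < A.card + k := by
  have hmeet : {B ∈ 𝔅 | ¬ Disjoint B A}.card ≤ A.card := by
    refine Finset.card_le_card_of_forall_subsingleton (fun B v ↦ v ∈ B) (fun B hB ↦ ?_)
      fun v _ B hB B' hB' ↦ h.eq_of_mem (Finset.mem_filter.1 hB.1).1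
        (Finset.mem_filter.1 hB'.1).1 hB.2 hB'.2
    obtain ⟨v, hvB, hvA⟩ := Finset.not_disjoint_iff.1 (Finset.mem_filter.1 hB).2
    exact ⟨v, hvA, hvB⟩
  have hdisj : {B ∈ 𝔅 | Disjoint B A}.card < k := by
    by_contra! hk
    obtain ⟨U, hU, hsub⟩ := exists_subset_mem_matchingUnions (h.isMatchingOf.mono
      (Finset.filter_subset _ _) ((Finset.filter_subset _ _).trans h.subset)) hk
    refine (hcover U hU).ne_empty (Finset.disjoint_iff_inter_eq_empty.1 (.mono_left hsub ?_))
    exact Finset.disjoint_biUnion_left _ _ _ |>.2 fun B hB ↦ (Finset.mem_filter.1 hB).2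
  have := 𝔅.card_filter_add_card_filter_not (Disjoint · A)
  omega

theorem card_le_card_univ [Fintype σ] (h : IsBlockForest 𝔅 T) : 𝔅.card ≤ Fintype.card σ :=
  Nat.lt_succ_iff.1 <| h.card_lt_card_add (A := Finset.univ) (k := 1) fun U hU ↦ by
    rw [Finset.inter_univ]
    exact nonempty_of_mem_matchingUnions le_rfl h.nonempty hU

theorem image_sdiff (h : IsBlockForest 𝔅 T) {T₀ : Finset (Finset σ)} {B : Finset σ} (hB : B ∈ 𝔅)
    (hT₀ : T₀ ⊆ T) (hdisj : ∀ H ∈ T, Disjoint H B → H ∈ T₀) (hne : ∀ H ∈ T₀, ¬ H ⊆ B) :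
    IsBlockForest (𝔅.erase B) (T₀.image (· \ B)) where
  hasLeafProp := (h.hasLeafProp.mono hT₀).image (f := (· \ B)) fun _ _ ↦ inf_sdiff
  subset B' hB' := by
    obtain ⟨hne, hB'⟩ := Finset.mem_erase.1 hB'
    have hBB' : Disjoint B' B := h.pairwiseDisjoint hB' hB hne
    exact Finset.mem_image.2 ⟨B', hdisj B' (h.subset hB') hBB', sdiff_eq_left.2 hBB'⟩
  nonempty := Finset.forall_mem_image.2 fun H hH ↦ Finset.sdiff_nonempty.2 (hne H hH)
  pairwiseDisjoint := h.pairwiseDisjoint.subset (Finset.coe_subset.2 (Finset.erase_subset _ _))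
  subset_biUnion := Finset.forall_mem_image.2 fun H hH v hv ↦ by
    obtain ⟨hvH, hvB⟩ := Finset.mem_sdiff.1 hv
    obtain ⟨B', hB', hvB'⟩ := h.exists_block (hT₀ hH) hvH
    exact Finset.mem_biUnion.2
      ⟨B', Finset.mem_erase.2 ⟨ne_of_mem_of_not_mem' hvB' hvB, hB'⟩, hvB'⟩
  isChain B' hB' := by
    obtain ⟨hne, hB'⟩ := Finset.mem_erase.1 hB'
    have hBB' : Disjoint B' B := h.pairwiseDisjoint hB' hB hne
    refine (h.isChain B' hB').mono ?_
    rw [Finset.coe_image, Set.image_image]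
    rintro _ ⟨H, hH, rfl⟩
    refine ⟨H, hT₀ hH, ?_⟩
    simp only [Finset.sdiff_inter_right_comm,
      sdiff_eq_left.2 (hBB'.mono_left Finset.inter_subset_right)]

/-- The special block is found through the chain property of forests, applied to the set consisting
of one common vertex for each block. -/
theorem exists_isSpecialBlock (h : IsBlockForest 𝔅 T) (hne : 𝔅.Nonempty) :
    ∃ B ∈ 𝔅, IsSpecialBlock T B := by
  have : Nonempty σ := hne.elim fun B hB ↦ (h.nonempty B (h.subset hB)).elim fun v _ ↦ ⟨v⟩
  choose! c hcB hc using fun B hB ↦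
    h.exists_common_vertex hB subset_rfl (h.nonempty B (h.subset hB))
  have hc_mem {H : Finset σ} (hH : H ∈ T) {u : σ} (hu : u ∈ H) {B : Finset σ} (hB : B ∈ 𝔅)
      (huB : u ∈ B) : c B ∈ H :=
    hc B hB H hH ⟨u, Finset.mem_inter.2 ⟨hu, huB⟩⟩
  obtain ⟨_, hv, hchain⟩ := h.hasLeafProp.exists_isChain_image_inter (hne.image c)
  obtain ⟨B, hB, rfl⟩ := Finset.mem_image.1 hv
  have hc_notMem {B' : Finset σ} (hB' : B' ∈ 𝔅) (hne : B' ≠ B) : c B' ∉ B := fun hcB' ↦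
    hne (h.eq_of_mem hB' hB (hcB B' hB') hcB')
  have hnested {H H' : Finset σ} (hH : H ∈ T) (hHB : ¬ H ⊆ B)
      (hle : H ∩ 𝔅.image c ⊆ H' ∩ 𝔅.image c) : ((H ∩ H') \ B).Nonempty := by
    obtain ⟨u, hu, huB⟩ := Finset.not_subset.1 hHB
    obtain ⟨B', hB', huB'⟩ := h.exists_block hH hu
    have hcH : c B' ∈ H := hc_mem hH hu hB' huB'
    have hcH' := hle (Finset.mem_inter.2 ⟨hcH, Finset.mem_image_of_mem c hB'⟩)
    exact ⟨c B', Finset.mem_sdiff.2 ⟨Finset.mem_inter.2 ⟨hcH, (Finset.mem_inter.1 hcH').1⟩,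
      hc_notMem hB' (ne_of_mem_of_not_mem' huB' huB)⟩⟩
  refine ⟨B, hB, fun H hH H' hH' hHB hHB' ⟨u, hu⟩ ↦ ?_⟩
  obtain ⟨huH, huH'⟩ := Finset.mem_inter.1 hu
  obtain ⟨B', hB', huB'⟩ := h.exists_block hH huH
  obtain ⟨hcH, hcH'⟩ := And.intro (hc_mem hH huH hB' huB') (hc_mem hH' huH' hB' huB')
  obtain rfl | hBB' := eq_or_ne B' B
  · obtain hle | hle := hchain.total (Set.mem_image_of_mem _ ⟨hH, hcH⟩)
      (Set.mem_image_of_mem _ ⟨hH', hcH'⟩)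
    · exact hnested hH hHB hle
    · exact Finset.inter_comm H H' ▸ hnested hH' hHB' hle
  · exact ⟨c B', Finset.mem_sdiff.2 ⟨Finset.mem_inter.2 ⟨hcH, hcH'⟩, hc_notMem hB' hBB'⟩⟩

end IsBlockForest

end BlockForests

section SpecialBlocks

variable {σ : Type} [DecidableEq σ] {𝔅 T : Finset (Finset σ)} {B C U X : Finset σ} {k : ℕ} {v : σ}

namespace IsBlockForest

theorem notMem_biUnion_erase (h : IsBlockForest 𝔅 T) (hB : B ∈ 𝔅) (hv : v ∈ B) :
    v ∉ (𝔅.erase B).biUnion id := by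
  intro hmem
  obtain ⟨B', hB', hvB' : v ∈ B'⟩ := Finset.mem_biUnion.1 hmem
  obtain ⟨hne, hB'⟩ := Finset.mem_erase.1 hB'
  exact hne (h.eq_of_mem hB' hB hvB' hv)

theorem exists_isLeast (h : IsBlockForest 𝔅 T) (hB : B ∈ 𝔅) :
    ∃ X, IsLeast {H | H ∈ T ∧ H ⊆ B} X := by
  obtain ⟨X, hX, hmin⟩ := {H ∈ T | H ⊆ B}.exists_minimal
    ⟨B, Finset.mem_filter.2 ⟨h.subset hB, subset_rfl⟩⟩
  refine ⟨X, Finset.mem_filter.1 hX, fun H hH ↦ ?_⟩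
  have htotal := (h.isChain B hB).total (Set.mem_image_of_mem _ hH.1)
    (Set.mem_image_of_mem _ (Finset.mem_filter.1 hX).1)
  simp only [Finset.inter_eq_left.2 hH.2,
    Finset.inter_eq_left.2 (Finset.mem_filter.1 hX).2] at htotal
  exact htotal.elim (hmin (Finset.mem_filter.2 hH)) id

theorem filter_disjoint (h : IsBlockForest 𝔅 T) (hB : B ∈ 𝔅) :
    IsBlockForest (𝔅.erase B) {H ∈ T | Disjoint H B} := by
  have himage : {H ∈ T | Disjoint H B}.image (· \ B) = {H ∈ T | Disjoint H B} := by
    conv_rhs => rw [← Finset.image_id (s := {H ∈ T | Disjoint H B})]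
    exact Finset.image_congr fun H hH ↦ sdiff_eq_left.2 (Finset.mem_filter.1 hH).2
  rw [← himage]
  refine h.image_sdiff hB (Finset.filter_subset _ _)
    (fun H hH hdisj ↦ Finset.mem_filter.2 ⟨hH, hdisj⟩) fun H hH hHB ↦ ?_
  obtain ⟨hHT, hdisj⟩ := Finset.mem_filter.1 hH
  exact (h.nonempty H hHT).ne_empty (disjoint_self.1 (hdisj.mono_right hHB))

theorem exists_subset_mem_matchingUnions_filter_disjoint (h : IsBlockForest 𝔅 T) (hB : B ∈ 𝔅)
    (hU : U ∈ matchingUnions T (k + 1)) :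
    ∃ U' ∈ matchingUnions {H ∈ T | Disjoint H B} k, U' ⊆ U := by
  obtain ⟨M, hM, hcard, rfl⟩ := hU
  have hmeet : {H ∈ M | ¬ Disjoint H B}.card ≤ 1 := Finset.card_le_one.2 fun H hH H' hH' ↦ by
    simp only [Finset.mem_filter, Finset.not_disjoint_iff_nonempty_inter] at hH hH'
    exact h.eq_of_isMatchingOf hM hB hH.1 hH'.1 hH.2 hH'.2
  have hk : k ≤ {H ∈ M | Disjoint H B}.card := by
    have := M.card_filter_add_card_filter_not (Disjoint · B)
    omega
  obtain ⟨U', hU', hsub⟩ := exists_subset_mem_matchingUnions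
    (hM.mono (Finset.filter_subset _ M) (Finset.filter_subset_filter _ hM.1)) hk
  exact ⟨U', hU', hsub.trans
    (Finset.biUnion_subset_biUnion_of_subset_left id (Finset.filter_subset _ M))⟩

theorem image_sdiff_filter_notMem (h : IsBlockForest 𝔅 T) (hB : B ∈ 𝔅)
    (hX : IsLeast {H | H ∈ T ∧ H ⊆ B} X) (hv : v ∈ X) :
    IsBlockForest (𝔅.erase B) ({H ∈ T | v ∉ H}.image (· \ B)) := by
  refine h.image_sdiff hB (Finset.filter_subset _ _) (fun H hH hdisj ↦ ?_) fun H hH ↦ ?_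
  · exact Finset.mem_filter.2 ⟨hH, Finset.disjoint_right.1 hdisj (hX.1.2 hv)⟩
  · obtain ⟨hHT, hvH⟩ := Finset.mem_filter.1 hH
    exact fun hHB ↦ hvH (hX.2 ⟨hHT, hHB⟩ hv)

theorem sdiff_eq_sdiff_of_notMem (h : IsBlockForest 𝔅 T) (hB : B ∈ 𝔅)
    (hX : IsLeast {H | H ∈ T ∧ H ⊆ B} X) (hCX : C ⊆ X) (hv : v ∈ X)
    (hvT : ∀ H ∈ T, (H ∩ (X \ C)).Nonempty → v ∈ H) (hU : U ∈ matchingUnions T k)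
    (hvU : v ∉ U) : U \ B = U \ C := by
  refine (Finset.sdiff_subset_sdiff subset_rfl (hCX.trans hX.1.2)).antisymm fun w hw ↦ ?_
  obtain ⟨hwU, hwC⟩ := Finset.mem_sdiff.1 hw
  refine Finset.mem_sdiff.2 ⟨hwU, fun hwB ↦ hvU ?_⟩
  obtain ⟨M, hM, -, rfl⟩ := hU
  obtain ⟨H, hH, hwH : w ∈ H⟩ := Finset.mem_biUnion.1 hwU
  refine Finset.mem_biUnion.2 ⟨H, hH, ?_⟩
  obtain hle | hle := (h.isChain B hB).total (Set.mem_image_of_mem _ (hM.1 hH))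
    (Set.mem_image_of_mem _ hX.1.1)
  · have hwX : w ∈ X := (Finset.mem_inter.1 (hle (Finset.mem_inter.2 ⟨hwH, hwB⟩))).1
    exact hvT H (hM.1 hH) ⟨w, Finset.mem_inter.2 ⟨hwH, Finset.mem_sdiff.2 ⟨hwX, hwC⟩⟩⟩
  · exact (Finset.mem_inter.1 (hle (Finset.mem_inter.2 ⟨hv, hX.1.2 hv⟩))).1

end IsBlockForest

theorem disjoint_of_mem_matchingUnions_filter_disjoint
    (hU : U ∈ matchingUnions {H ∈ T | Disjoint H B} k) : Disjoint B U := by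
  obtain ⟨M, hM, -, rfl⟩ := hU
  exact Finset.disjoint_biUnion_right _ _ _ |>.2 fun H hH ↦ (Finset.mem_filter.1 (hM.1 hH)).2.symm

theorem IsSpecialBlock.matchingUnions_image_sdiff_filter_notMem (hspecial : IsSpecialBlock T B)
    (hX : IsLeast {H | H ∈ T ∧ H ⊆ B} X) (hv : v ∈ X) (k : ℕ) :
    matchingUnions ({H ∈ T | v ∉ H}.image (· \ B)) k =
      (· \ B) '' {U | U ∈ matchingUnions T k ∧ v ∉ U} := by
  have hne (H : Finset σ) (hH : H ∈ {H ∈ T | v ∉ H}) : H ∈ T ∧ ¬ H ⊆ B := by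
    obtain ⟨hHT, hvH⟩ := Finset.mem_filter.1 hH
    exact ⟨hHT, fun hHB ↦ hvH (hX.2 ⟨hHT, hHB⟩ hv)⟩
  rw [matchingUnions_image_sdiff (fun H hH ↦ (hne H hH).2) fun H hH H' hH' ↦
    hspecial H (hne H hH).1 H' (hne H' hH').1 (hne H hH).2 (hne H' hH').2]
  congr 1
  ext U
  exact mem_matchingUnions_filter_notMem

end SpecialBlocks

section Regularity

variable {σ : Type} [Fintype σ] [DecidableEq σ] {K} {𝔅 T : Finset (Finset σ)}
  {A B X : Finset σ} {d k : ℕ}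

namespace IsBlockForest

theorem esymmRegular_image_sdiff (h : IsBlockForest 𝔅 T) (hB : B ∈ 𝔅)
    (hX : IsLeast {H | H ∈ T ∧ H ⊆ B} X) (hA : Disjoint A B)
    (hreg : EsymmRegular K d (singletons A ∪ matchingUnions {H ∈ T | Disjoint H B} k)) :
    EsymmRegular K d ((· \ X) '' (singletons A ∪ matchingUnions T (k + 1))) := by
  refine hreg.congr ?_ ?_
  · rintro U (hw | hU)
    · exact ⟨U \ X, ⟨U, .inl hw, rfl⟩, Finset.sdiff_subset⟩
    · have hdisj := (disjoint_of_mem_matchingUnions_filter_disjoint hU).mono_left hX.1.2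
      have hXU : X ∪ U ∈ matchingUnions T (k + 1) := insert_union_mem_matchingUnions
        (matchingUnions_mono (Finset.filter_subset _ _) k hU) hX.1.1 (h.nonempty X hX.1.1) hdisj
      exact ⟨(X ∪ U) \ X, ⟨X ∪ U, .inr hXU, rfl⟩, sdiff_le_iff.2 le_rfl⟩
  · rintro _ ⟨_, ⟨w, hw, rfl⟩ | hU, rfl⟩
    · refine ⟨{w}, .inl ⟨w, hw, rfl⟩, Finset.subset_sdiff.2 ⟨subset_rfl, ?_⟩⟩
      exact (hA.mono (Finset.singleton_subset_iff.2 hw) hX.1.2)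
    · obtain ⟨U', hU', hsub⟩ := h.exists_subset_mem_matchingUnions_filter_disjoint hB hU
      have hdisj := disjoint_of_mem_matchingUnions_filter_disjoint hU'
      exact ⟨U', .inr hU', Finset.subset_sdiff.2 ⟨hsub, (hdisj.mono_left hX.1.2).symm⟩⟩

theorem esymmRegular_insert (h : IsBlockForest 𝔅 T) (hB : B ∈ 𝔅) (hspecial : IsSpecialBlock T B)
    (hX : IsLeast {H | H ∈ T ∧ H ⊆ B} X) (hA : Disjoint A B)
    (hreg : ∀ v ∈ X, EsymmRegular K d
      (singletons (insert v A) ∪ matchingUnions ({H ∈ T | v ∉ H}.image (· \ B)) k)) :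
    EsymmRegular K d (insert X (singletons A ∪ matchingUnions T k)) := by
  refine .of_forall_ssubset (Set.mem_insert X _) fun C hCX ↦ ?_
  obtain ⟨v, hv, hvT⟩ := h.exists_common_vertex hB (Finset.sdiff_subset.trans hX.1.2)
    (Finset.sdiff_nonempty.2 hCX.not_subset)
  obtain ⟨hvX, hvC⟩ := Finset.mem_sdiff.1 hv
  have hsdiff {U : Finset σ} (hU : U ∈ matchingUnions T k) (hvU : v ∉ U) : U \ B = U \ C :=
    h.sdiff_eq_sdiff_of_notMem hB hX hCX.subset hvX hvT hU hvU
  refine ⟨v, hv, (hreg v hvX).congr ?_ ?_⟩ <;>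
    rw [hspecial.matchingUnions_image_sdiff_filter_notMem hX hvX]
  · rintro _ (⟨w, hw, rfl⟩ | ⟨U, ⟨hU, hvU⟩, rfl⟩)
    · obtain rfl | hwA := Finset.mem_insert.1 hw
      · exact ⟨{w}, Set.mem_insert _ _, subset_rfl⟩
      · exact ⟨{w} \ C, .inr ⟨{w}, .inr (.inl ⟨w, hwA, rfl⟩), rfl⟩, Finset.sdiff_subset⟩
    · exact ⟨U \ C, .inr ⟨U, .inr (.inr hU), rfl⟩, (hsdiff hU hvU).ge⟩
  · have hv_mem : {v} ∈ singletons (insert v A) := ⟨v, Finset.mem_insert_self v A, rfl⟩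
    rintro _ (rfl | ⟨U, hU, rfl⟩)
    · exact ⟨{v}, .inl hv_mem, subset_rfl⟩
    obtain rfl | ⟨w, hw, rfl⟩ | hU := hU
    · exact ⟨{v}, .inl hv_mem, Finset.singleton_subset_iff.2 hv⟩
    · refine ⟨{w}, .inl ⟨w, Finset.mem_insert_of_mem hw, rfl⟩,
        Finset.subset_sdiff.2 ⟨subset_rfl, ?_⟩⟩
      exact hA.mono (Finset.singleton_subset_iff.2 hw) (hCX.subset.trans hX.1.2)
    · by_cases hvU : v ∈ U
      · exact ⟨{v}, .inl hv_mem, Finset.singleton_subset_iff.2 (Finset.mem_sdiff.2 ⟨hvU, hvC⟩)⟩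
      · exact ⟨U \ B, .inr ⟨U, ⟨hU, hvU⟩, rfl⟩, (hsdiff hU hvU).le⟩

theorem esymmRegular (h : IsBlockForest 𝔅 T) (hA : Disjoint A (𝔅.biUnion id))
    (hk : k ≤ 𝔅.card + 1) (hd : d + A.card + 𝔅.card + 1 = Fintype.card σ + k) :
    EsymmRegular K d (singletons A ∪ matchingUnions T k) := by
  induction 𝔅 using Finset.strongInduction generalizing T A k with
  | H 𝔅 ih =>
    obtain _ | k := k
    · exact .of_empty_mem (.inr (empty_mem_matchingUnions_zero T))
    obtain hcard | hcard := (Nat.succ_le_succ_iff.1 hk).eq_or_lt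
    · rw [h.matchingUnions_eq_empty (by omega), Set.union_empty]
      exact esymmRegular_singletons (by omega)
    obtain ⟨B, hB, hspecial⟩ := h.exists_isSpecialBlock (Finset.card_pos.1 (by omega))
    obtain ⟨X, hX⟩ := h.exists_isLeast hB
    have hAB : Disjoint A B := hA.mono_right (Finset.subset_biUnion_of_mem id hB)
    have hAerase : Disjoint A ((𝔅.erase B).biUnion id) :=
      hA.mono_right (Finset.biUnion_subset_biUnion_of_subset_left id (Finset.erase_subset B 𝔅))
    have hcard_erase := Finset.card_erase_add_one hB
    refine .of_sdiff_of_insert X (h.esymmRegular_image_sdiff hB hX hAB ?_)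
      (h.esymmRegular_insert hB hspecial hX hAB fun v hv ↦ ?_)
    · exact ih _ (Finset.erase_ssubset hB) (h.filter_disjoint hB) hAerase (by omega) (by omega)
    · refine ih _ (Finset.erase_ssubset hB) (h.image_sdiff_filter_notMem hB hX hv) ?_
        (by omega) ?_
      · exact Finset.disjoint_insert_left.2 ⟨h.notMem_biUnion_erase hB (hX.1.2 hv), hAerase⟩
      · rw [Finset.card_insert_of_notMem (Finset.disjoint_right.1 hAB (hX.1.2 hv))]
        omega

theorem gradedDepth_sqfreeIdeal_insert (h : IsBlockForest 𝔅 T) (hB : B ∈ 𝔅)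
    (hspecial : IsSpecialBlock T B) (hmin : ∀ H ∈ T, H ⊆ B → H = B) (hk : 1 ≤ k)
    (hk' : k ≤ 𝔅.card) :
    gradedDepth K (sqfreeIdeal K (insert B (matchingUnions T k))) =
      Fintype.card σ - 𝔅.card + k - 1 := by
  have hleast : IsLeast {H | H ∈ T ∧ H ⊆ B} B :=
    ⟨⟨h.subset hB, subset_rfl⟩, fun H hH ↦ (hmin H hH.1 hH.2).ge⟩
  have hcard := h.card_le_card_univ
  have hcard_erase := Finset.card_erase_add_one hB
  refine gradedDepth_sqfreeIdeal ?_ ?_ fun A hA ↦ ?_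
  · rintro G (rfl | hG)
    · exact h.nonempty G (h.subset hB)
    · exact nonempty_of_mem_matchingUnions hk h.nonempty hG
  · have hreg := h.esymmRegular_insert (K := K) (A := ∅) (k := k)
      (d := Fintype.card σ - 𝔅.card + k - 1) hB hspecial hleast (Finset.disjoint_empty_left B)
      fun v hv ↦ (h.image_sdiff_filter_notMem hB hleast hv).esymmRegular
        (by simpa using h.notMem_biUnion_erase hB hv) (by omega)
        (by rw [insert_empty_eq, Finset.card_singleton]; omega)
    simpa only [singletons, Finset.coe_empty, Set.image_empty, Set.empty_union] using hreg
  · have := h.card_lt_card_add fun U hU ↦ hA U (Set.mem_insert_of_mem B hU)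
    omega

end IsBlockForest

end Regularity

section Grafting

variable {σ : Type} [DecidableEq σ] {S : Finset (Finset σ)} {F G H : Finset σ}

theorem IsSpecialLeafOf.isSpecialBlock (hF : IsSpecialLeafOf S F) : IsSpecialBlock S F :=
  fun H hH H' hH' hHF hHF' ↦ (hF.2 H hH H' hH' (ne_of_not_le hHF) (ne_of_not_le hHF')).1

theorem IsGoodLeafOf.isChain_image_inter (hF : IsGoodLeafOf S F) :
    IsChain (· ⊆ ·) ((· ∩ F) '' (S : Set (Finset σ))) := by
  rintro _ ⟨H, hH, rfl⟩ _ ⟨H', hH', rfl⟩ -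
  simp only [Finset.inter_comm _ F]
  obtain rfl | hHF := eq_or_ne H F
  · exact .inr (Finset.inter_subset_left.trans (Finset.inter_self H).ge)
  obtain rfl | hHF' := eq_or_ne H' F
  · exact .inl (Finset.inter_subset_left.trans (Finset.inter_self H').ge)
  have hleaf : IsLeafOf {F, H, H'} F := hF.2 _
    (by simpa [Finset.insert_subset_iff] using ⟨hF.1, hH, hH'⟩) (Finset.mem_insert_self _ _)
  obtain ⟨J, hJ, hJF, hjoint⟩ := hleaf.exists_joint (H := H) (by simp) hHF
  obtain rfl | rfl | rfl : J = F ∨ J = H ∨ J = H' := by simpa using hJ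
  · exact absurd rfl hJF
  · exact .inr (hjoint H' (by simp) hHF')
  · exact .inl (hjoint H (by simp) hHF)

theorem IsLeafOf.exists_forall_mem_imp_eq (hF : IsLeafOf S F)
    (hanti : IsAntichain (· ⊆ ·) (S : Set (Finset σ))) (hne : F.Nonempty) :
    ∃ v ∈ F, ∀ H ∈ S, v ∈ H → H = F := by
  obtain ⟨hFS, honly | ⟨J, hJ, hJF, hjoint⟩⟩ := hF
  · exact hne.imp fun v hv ↦ ⟨hv, fun H hH _ ↦ honly H hH⟩
  · obtain ⟨v, hvF, hvJ⟩ := Finset.not_subset.1 (hanti hFS hJ hJF.symm)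
    refine ⟨v, hvF, fun H hH hvH ↦ not_imp_comm.1 (hjoint H hH) fun hle ↦ hvJ ?_⟩
    exact (Finset.mem_inter.1 (hle (Finset.mem_inter.2 ⟨hvF, hvH⟩))).2

theorem IsLeafOf.of_subset {T : Finset (Finset σ)} (hF : IsLeafOf S F) (hT : T ⊆ S) (hFT : F ∈ T)
    (hdisj : ∀ J ∈ S, J ∉ T → F ∩ J = ∅) : IsLeafOf T F := by
  refine ⟨hFT, or_iff_not_imp_left.2 fun hother ↦ ?_⟩
  push Not at hother
  obtain ⟨G, hG, hGF⟩ := hother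
  obtain ⟨J, hJ, hJF, hjoint⟩ := hF.exists_joint (hT hG) hGF
  by_cases hJT : J ∈ T
  · exact ⟨J, hJT, hJF, fun H hH ↦ hjoint H (hT hH)⟩
  · refine ⟨G, hG, hGF, fun H hH hHF ↦ (hjoint H (hT hH) hHF).trans ?_⟩
    rw [hdisj J hJ hJT]
    exact Finset.empty_subset _

theorem IsGrafted.exists_isLeafOf (hS : IsGrafted S) (hH : H ∈ S) {v : σ} (hv : v ∈ H) :
    ∃ F, IsLeafOf S F ∧ v ∈ F := by
  obtain ⟨_, Fs, Gs, rfl, -, hcover, hleaves, -, -⟩ := hS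
  obtain hH | hH := Finset.mem_union.1 hH
  · exact ⟨H, (hleaves H).2 hH, hv⟩
  · obtain ⟨F, hF, hvF⟩ := hcover H hH v hv
    exact ⟨F, (hleaves F).2 hF, hvF⟩

theorem IsLeafOf.erase_of_isGrafted (hF : IsLeafOf S F)
    (hanti : IsAntichain (· ⊆ ·) (S : Set (Finset σ))) (hne : F.Nonempty) (hFG : F ≠ G)
    (hgrafted : IsGrafted (S.erase G)) : IsLeafOf (S.erase G) F := by
  obtain ⟨v, hvF, hv⟩ := hF.exists_forall_mem_imp_eq hanti hne
  obtain ⟨L, hL, hvL⟩ := hgrafted.exists_isLeafOf (Finset.mem_erase.2 ⟨hFG, hF.1⟩) hvF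
  exact hv L (Finset.mem_of_mem_erase hL.1) hvL ▸ hL

theorem IsGrafted.isGoodLeafOf (hS : IsGrafted S)
    (hanti : IsAntichain (· ⊆ ·) (S : Set (Finset σ))) (hne : F.Nonempty) (hF : IsLeafOf S F) :
    IsGoodLeafOf S F := by
  refine ⟨hF.1, fun T hT hFT ↦ ?_⟩
  induction hS with
  | intro S Fs Gs hunion hdisj _ hleaves hFdisj hrec ih =>
    have hF_mem : F ∈ Fs := (hleaves F).1 hF
    by_cases hGT : Gs ⊆ T
    · refine hF.of_subset hT hFT fun J hJ hJT ↦ ?_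
      have hJ_mem : J ∈ Fs := (Finset.mem_union.1 (hunion ▸ hJ)).resolve_right fun h ↦ hJT (hGT h)
      exact hFdisj F hF_mem J hJ_mem (ne_of_mem_of_not_mem hFT hJT)
    · obtain ⟨G, hG, hGT⟩ := Finset.not_subset.1 hGT
      refine ih G hG (hanti.subset (Finset.coe_subset.2 (Finset.erase_subset G S)))
        (hF.erase_of_isGrafted hanti hne ?_ (hrec G hG)) (Finset.subset_erase.2 ⟨hT, hGT⟩)
      exact fun hFG ↦ Finset.disjoint_left.1 hdisj hF_mem (hFG ▸ hG)

theorem IsCMForestFacets.exists_isBlockForest (hS : IsCMForestFacets S)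
    (hne : ∀ H ∈ S, H.Nonempty) (hanti : IsAntichain (· ⊆ ·) (S : Set (Finset σ))) :
    ∃ 𝔅, IsBlockForest 𝔅 S ∧ ∀ F, F ∈ 𝔅 ↔ IsLeafOf S F := by
  obtain ⟨hforest, hgrafted⟩ := hS
  have hgrafted' := hgrafted
  obtain ⟨_, Fs, Gs, rfl, -, hcover, hleaves, hFdisj, -⟩ := hgrafted'
  refine ⟨Fs, ⟨hforest, Finset.subset_union_left, hne, fun F hF F' hF' h ↦
    Finset.disjoint_iff_inter_eq_empty.2 (hFdisj F hF F' hF' h), fun H hH v hv ↦ ?_,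
    fun B hB ↦ ?_⟩, fun F ↦ (hleaves F).symm⟩
  · obtain ⟨F, hF, hvF⟩ := hgrafted.exists_isLeafOf hH hv
    exact Finset.mem_biUnion.2 ⟨F, (hleaves F).1 hF, hvF⟩
  · have hB' : IsLeafOf (Fs ∪ Gs) B := (hleaves B).2 hB
    exact (hgrafted.isGoodLeafOf hanti (hne B hB'.1) hB').isChain_image_inter

end Grafting

section Statements

variable {V : Type} [Fintype V] [DecidableEq V] (K : Type) [Field K]

theorem stmt2 (Δ : SimplicialComplexOn V)
    (hcov : ∀ v : V, ∃ F ∈ Δ.facets, v ∈ F)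
    (hCM : IsCMForestFacets Δ.facets)
    (F : Finset V) (hF : IsSpecialLeafOf Δ.facets F) :
    ∀ k : ℕ, 1 ≤ k → k ≤ matchingNumberOf Δ.facets →
      gradedDepth K (sqfreePow K (facetIdealOf K Δ.facets) k + Ideal.span {xMon K F}) =
        Fintype.card V - matchingNumberOf Δ.facets + k - 1 := by
  intro k hk hkν
  have hanti : IsAntichain (· ⊆ ·) (Δ.facets : Set (Finset V)) :=
    fun G hG H hH hne hle ↦ hne (Δ.antichain G hG H hH hle)
  obtain ⟨𝔅, hblocks, h𝔅⟩ := hCM.exists_isBlockForest Δ.nonempty_facet hanti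
  rw [hblocks.matchingNumberOf_eq_card] at hkν ⊢
  rw [sqfreePow_facetIdealOf Δ.nonempty_facet, Submodule.add_eq_sup, ← sqfreeIdeal_insert]
  exact hblocks.gradedDepth_sqfreeIdeal_insert ((h𝔅 F).2 hF.1) hF.isSpecialBlock
    (fun H hH ↦ Δ.antichain H hH F hF.1.1) hk hkν

end Statements
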